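/- Let f(β) := (1/n) ∑_{i=1}^{n} ρ_{Q,τ}(Y_i − ⟨X_i, β⟩), where the covariates {X_i}_{i=1}^n follow Assumption 1 and {(X_i, Y_i)}_{i=1}^n are independent observations. Then there exist constants C_1, C_2 > 0 such that with probability exceeding 1 − exp(−C_1 d) − exp(−√(n/log n)), it holds simultaneously for all β_1, β_2 ∈ R^d that |f(β_1) − f(β_2) − E[f(β_1) − f(β_2)]| ≤ C_2 max{τ, 1−τ} √(C_u d/n) ‖β_1 − β_2‖_2. -/

import Mathlib

open MeasureTheory ProbabilityTheory

noncomputable section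

/-- The quantile (check) loss `ρ_{Q,τ}(x) = τ x 1{x ≥ 0} + (τ−1) x 1{x < 0}`. -/
def qloss (τ x : ℝ) : ℝ := if 0 ≤ x then τ * x else (τ - 1) * x

/-- The quadratic form `v ↦ vᵀ Σ v` of a matrix on Euclidean space. -/
def quadForm {d : ℕ} (S : Matrix (Fin d) (Fin d) ℝ) (v : EuclideanSpace ℝ (Fin d)) : ℝ :=
  dotProduct (fun i => v i) (S.mulVec fun i => v i)

/-- Maximal separated subfamilies exist in a finite setting with bounded cardinality. -/
theorem exists_net (d : ℕ) : ∃ N : Finset (EuclideanSpace ℝ (Fin d)), N.card ≤ 5 ^ d ∧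
    (∀ v ∈ N, ‖v‖ ≤ 1) ∧ ∀ v : EuclideanSpace ℝ (Fin d), ‖v‖ ≤ 1 → ∃ w ∈ N, ‖v - w‖ ≤ 1 / 2 := by
  classical
  let Q : ℕ → Prop := fun k => ∃ s : Finset (EuclideanSpace ℝ (Fin d)), s.card = k ∧
    (∀ c ∈ s, ‖c‖ ≤ 2) ∧ (∀ c ∈ s, ∀ e ∈ s, c ≠ e → 1 ≤ ‖c - e‖)
  have hQ0 : Q 0 := ⟨∅, by simp⟩
  have hb : ∀ s : Finset (EuclideanSpace ℝ (Fin d)), (∀ c ∈ s, ‖c‖ ≤ 2) →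
      (∀ c ∈ s, ∀ e ∈ s, c ≠ e → 1 ≤ ‖c - e‖) → s.card ≤ 5 ^ d := by
    intro s h1 h2
    simpa using Besicovitch.card_le_of_separated s h1 h2
  obtain ⟨s, hs, hs1, hs2⟩ := Nat.findGreatest_spec (P := Q) (Nat.zero_le (5 ^ d)) hQ0
  have hmax : ∀ v : EuclideanSpace ℝ (Fin d), ‖v‖ ≤ 2 → ∃ c ∈ s, ‖v - c‖ ≤ 1 := by
    intro v hv
    by_contra! hcon
    have hvs : v ∉ s := fun h => by
      have := hcon v h
      simp at this
      linarith
    have hA : ∀ c ∈ insert v s, ‖c‖ ≤ 2 := by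
      intro c hc
      rcases Finset.mem_insert.1 hc with rfl | h
      · exact hv
      · exact hs1 c h
    have hB : ∀ c ∈ insert v s, ∀ e ∈ insert v s, c ≠ e → 1 ≤ ‖c - e‖ := by
      intro c hc e he hce
      rcases Finset.mem_insert.1 hc with rfl | h <;> rcases Finset.mem_insert.1 he with rfl | h'
      · exact absurd rfl hce
      · exact (hcon e h').le
      · rw [norm_sub_rev]; exact (hcon c h).le
      · exact hs2 c h e h' hce
    have hq : Q (s.card + 1) := ⟨insert v s, Finset.card_insert_of_notMem hvs, hA, hB⟩
    have hle : s.card + 1 ≤ 5 ^ d := by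
      have := hb _ hA hB
      rwa [Finset.card_insert_of_notMem hvs] at this
    have := Nat.le_findGreatest hle hq
    omega
  have hcov : ∀ v : EuclideanSpace ℝ (Fin d), ‖v‖ ≤ 1 → ∃ c ∈ s, ‖(2:ℝ) • v - c‖ ≤ 1 := by
    intro v hv
    apply hmax
    rw [norm_smul]; norm_num; linarith
  refine ⟨s.image (fun c => (1/2 : ℝ) • c), Finset.card_image_le.trans (hb s hs1 hs2), ?_, ?_⟩
  · intro v hv
    obtain ⟨c, hc, rfl⟩ := Finset.mem_image.1 hv
    have := hs1 c hc
    rw [norm_smul]; norm_num; linarith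
  · intro v hv
    obtain ⟨c, hc, h⟩ := hcov v hv
    refine ⟨_, Finset.mem_image_of_mem _ hc, ?_⟩
    have : v - (1/2 : ℝ) • c = (1/2 : ℝ) • ((2:ℝ) • v - c) := by
      rw [smul_sub, smul_smul]; norm_num
    rw [this, norm_smul]; norm_num; linarith

theorem net_norm {d : ℕ} {N : Finset (EuclideanSpace ℝ (Fin d))}
    (hN : ∀ v : EuclideanSpace ℝ (Fin d), ‖v‖ ≤ 1 → ∃ w ∈ N, ‖v - w‖ ≤ 1 / 2)
    (u : EuclideanSpace ℝ (Fin d)) : ∃ w ∈ N, ‖u‖ ≤ 2 * inner ℝ u w := by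
  by_cases hu : u = 0
  · obtain ⟨w, hw, -⟩ := hN 0 (by simp)
    exact ⟨w, hw, by simp [hu]⟩
  · have hpos : 0 < ‖u‖ := norm_pos_iff.2 hu
    obtain ⟨w, hw, h⟩ := hN (‖u‖⁻¹ • u) (by rw [norm_smul, norm_inv, norm_norm]; field_simp; rfl)
    refine ⟨w, hw, ?_⟩
    have h1 : inner ℝ u (‖u‖⁻¹ • u) = ‖u‖ := by
      rw [inner_smul_right, real_inner_self_eq_norm_sq]; field_simp
    have h2 : inner ℝ u (‖u‖⁻¹ • u - w) ≤ ‖u‖ * (1/2) :=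
      (real_inner_le_norm _ _).trans (mul_le_mul_of_nonneg_left h hpos.le)
    rw [inner_sub_right, h1] at h2
    linarith

theorem net_quad {d : ℕ} {ι : Type*} {N : Finset (EuclideanSpace ℝ (Fin d))}
    (hN : ∀ v : EuclideanSpace ℝ (Fin d), ‖v‖ ≤ 1 → ∃ w ∈ N, ‖v - w‖ ≤ 1 / 2)
    (B : Finset ι) (x : ι → EuclideanSpace ℝ (Fin d)) (V : ℝ)
    (hV : ∀ w ∈ N, ∑ i ∈ B, (inner ℝ (x i) w) ^ 2 ≤ V) (v : EuclideanSpace ℝ (Fin d)) :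
    ∑ i ∈ B, (inner ℝ (x i) v) ^ 2 ≤ 4 * V * ‖v‖ ^ 2 := by
  set Q : EuclideanSpace ℝ (Fin d) → ℝ := fun v => ∑ i ∈ B, (inner ℝ (x i) v) ^ 2 with hQ
  have hcont : Continuous Q := by rw [hQ]; fun_prop
  have hhom : ∀ (r : ℝ) v, Q (r • v) = r ^ 2 * Q v := by
    intro r v
    simp only [hQ, inner_smul_right, mul_pow, Finset.mul_sum]
  obtain ⟨v0, hv0, hmax⟩ := (isCompact_closedBall (0 : EuclideanSpace ℝ (Fin d)) 1).exists_isMaxOn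
    ⟨0, by simp⟩ hcont.continuousOn
  have hv0' : ‖v0‖ ≤ 1 := by simpa using hv0
  have hmax' : ∀ u, ‖u‖ ≤ 1 → Q u ≤ Q v0 := fun u hu => hmax (by simpa using hu)
  have hQv0 : Q v0 ≤ 4 * V := by
    obtain ⟨w, hw, h⟩ := hN v0 hv0'
    have h1 : Q v0 ≤ 2 * Q w + 2 * Q (v0 - w) := by
      simp only [hQ, Finset.mul_sum, ← Finset.sum_add_distrib]
      apply Finset.sum_le_sum
      intro i _
      rw [inner_sub_right]
      nlinarith [sq_nonneg (2 * inner ℝ (x i) w - inner ℝ (x i) v0)]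
    have h2 : Q ((2:ℝ) • (v0 - w)) ≤ Q v0 := hmax' _ (by rw [norm_smul]; norm_num; linarith)
    rw [hhom] at h2
    have h3 := hV w hw
    change Q w ≤ V at h3
    linarith
  change Q v ≤ _
  by_cases hv : v = 0
  · simp [hv, hQ]
  · have hpos : 0 < ‖v‖ := norm_pos_iff.2 hv
    have h1 : Q (‖v‖ • (‖v‖⁻¹ • v)) = ‖v‖ ^ 2 * Q (‖v‖⁻¹ • v) := hhom _ _
    rw [smul_smul, mul_inv_cancel₀ hpos.ne', one_smul] at h1
    have h2 : Q (‖v‖⁻¹ • v) ≤ Q v0 :=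
      hmax' _ (by rw [norm_smul, norm_inv, norm_norm]; field_simp; rfl)
    rw [h1]
    nlinarith [sq_nonneg ‖v‖]

/-- Signs. -/
def sg (b : Bool) : ℝ := if b then 1 else -1

theorem sign_mgf {n : ℕ} (a : Fin n → ℝ) :
    ∑ e : Fin n → Bool, Real.exp (∑ i, sg (e i) * a i) ≤ 2 ^ n * Real.exp ((∑ i, a i ^ 2) / 2) := by
  have h1 : ∀ e : Fin n → Bool, Real.exp (∑ i, sg (e i) * a i) = ∏ i, Real.exp (sg (e i) * a i) :=
    fun e => Real.exp_sum _ _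
  simp_rw [h1]
  have h2 : ∑ e : Fin n → Bool, ∏ i, Real.exp (sg (e i) * a i)
      = ∏ i : Fin n, ∑ b : Bool, Real.exp (sg b * a i) :=
    (Fintype.prod_sum (fun (i : Fin n) (b : Bool) => Real.exp (sg b * a i))).symm
  rw [h2]
  have h3 : ∀ i, ∑ b : Bool, Real.exp (sg b * a i) ≤ 2 * Real.exp (a i ^ 2 / 2) := by
    intro i
    have := Real.cosh_le_exp_half_sq (a i)
    rw [Real.cosh_eq] at this
    simp [sg]
    linarith
  calc ∏ i : Fin n, ∑ b : Bool, Real.exp (sg b * a i) ≤ ∏ i, (2 * Real.exp (a i ^ 2 / 2)) :=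
        Finset.prod_le_prod (fun i _ => by positivity) (fun i _ => h3 i)
    _ = _ := by
        rw [Finset.prod_mul_distrib, ← Real.exp_sum, Finset.sum_div]; simp

open Classical in
theorem sign_tail {n : ℕ} (a : Fin n → ℝ) (V s : ℝ) (hV : 0 < V) (hs : 0 ≤ s)
    (ha : ∑ i, a i ^ 2 ≤ V) :
    ((Finset.univ.filter fun e : Fin n → Bool => Real.sqrt (2 * V * s) < ∑ i, sg (e i) * a i).card : ℝ)
      ≤ 2 ^ n * Real.exp (-s) := by
  set r := Real.sqrt (2 * V * s) with hr
  have hr2 : r ^ 2 = 2 * V * s := Real.sq_sqrt (by positivity)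
  have hr0 : 0 ≤ r := Real.sqrt_nonneg _
  set l := r / V with hl
  have hl0 : 0 ≤ l := by positivity
  have h1 := sign_mgf (fun i => l * a i)
  have h2 : ((Finset.univ.filter fun e : Fin n → Bool => r < ∑ i, sg (e i) * a i).card : ℝ)
      * Real.exp (l * r) ≤ ∑ e : Fin n → Bool, Real.exp (∑ i, sg (e i) * (l * a i)) := by
    rw [← nsmul_eq_mul, ← Finset.sum_const]
    refine (Finset.sum_le_sum (fun e he => ?_)).trans
      (Finset.sum_le_sum_of_subset_of_nonneg (Finset.filter_subset _ _)
        (fun _ _ _ => (Real.exp_pos _).le))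
    have he' := (Finset.mem_filter.1 he).2
    apply Real.exp_le_exp.2
    have : ∑ i, sg (e i) * (l * a i) = l * ∑ i, sg (e i) * a i := by
      rw [Finset.mul_sum]; exact Finset.sum_congr rfl fun i _ => by ring
    rw [this]
    exact mul_le_mul_of_nonneg_left he'.le hl0
  have h3 : (∑ i, (l * a i) ^ 2) / 2 ≤ s := by
    simp_rw [mul_pow, ← Finset.mul_sum]
    have : l ^ 2 * ∑ i, a i ^ 2 ≤ l ^ 2 * V := mul_le_mul_of_nonneg_left ha (sq_nonneg _)
    have h4 : l ^ 2 * V = 2 * s := by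
      rw [hl, div_pow, hr2]; field_simp
    linarith
  have h5 : l * r = 2 * s := by
    rw [hl, div_mul_eq_mul_div, ← sq, hr2]; field_simp
  rw [h5] at h2
  have h6 : 2 ^ n * Real.exp ((∑ i, (l * a i) ^ 2) / 2) ≤ 2 ^ n * Real.exp s := by
    gcongr
  have h7 := h2.trans (h1.trans h6)
  have h8 : Real.exp s = Real.exp (-s) * Real.exp (2 * s) := by rw [← Real.exp_add]; ring_nf
  rw [h8, ← mul_assoc] at h7
  exact le_of_mul_le_mul_right h7 (Real.exp_pos _)

open Classical in
theorem sign_vec_tail {d n : ℕ} (u : Fin n → EuclideanSpace ℝ (Fin d)) (V s : ℝ) (hV : 0 < V)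
    (hs : 0 ≤ s) (hu : ∀ v : EuclideanSpace ℝ (Fin d), ‖v‖ ≤ 1 → ∑ i, (inner ℝ (u i) v) ^ 2 ≤ V) :
    ((Finset.univ.filter fun e : Fin n → Bool =>
      2 * Real.sqrt (2 * V * s) < ‖∑ i, sg (e i) • u i‖).card : ℝ)
      ≤ 5 ^ d * (2 ^ n * Real.exp (-s)) := by
  obtain ⟨N, hN1, hN2, hN3⟩ := exists_net d
  have hsub : (Finset.univ.filter fun e : Fin n → Bool =>
      2 * Real.sqrt (2 * V * s) < ‖∑ i, sg (e i) • u i‖) ⊆ N.biUnion fun w =>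
      (Finset.univ.filter fun e : Fin n → Bool =>
        Real.sqrt (2 * V * s) < ∑ i, sg (e i) * inner ℝ (u i) w) := by
    intro e he
    have he' := (Finset.mem_filter.1 he).2
    obtain ⟨w, hw, h⟩ := net_norm hN3 (∑ i, sg (e i) • u i)
    refine Finset.mem_biUnion.2 ⟨w, hw, Finset.mem_filter.2 ⟨Finset.mem_univ _, ?_⟩⟩
    rw [sum_inner] at h
    simp_rw [real_inner_smul_left] at h
    linarith
  calc _ ≤ ((N.biUnion fun w => (Finset.univ.filter fun e : Fin n → Bool =>
        Real.sqrt (2 * V * s) < ∑ i, sg (e i) * inner ℝ (u i) w)).card : ℝ) := by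
        exact_mod_cast Finset.card_le_card hsub
    _ ≤ ∑ w ∈ N, ((Finset.univ.filter fun e : Fin n → Bool =>
        Real.sqrt (2 * V * s) < ∑ i, sg (e i) * inner ℝ (u i) w).card : ℝ) := by
        exact_mod_cast Finset.card_biUnion_le
    _ ≤ ∑ w ∈ N, (2 ^ n * Real.exp (-s)) :=
        Finset.sum_le_sum fun w hw => sign_tail _ V s hV hs (hu w (hN2 w hw))
    _ = N.card * (2 ^ n * Real.exp (-s)) := by simp
    _ ≤ _ := by
        gcongr
        exact_mod_cast hN1

theorem subset_count {α : Type*} [DecidableEq α] (R : Finset α) (D : ℕ) (t : ℝ) (hD : 1 ≤ D)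
    (hDt : (D : ℝ) ≤ t) (hR : (R.card : ℝ) ≤ t) :
    ((R.powerset.filter fun B => B.card ≤ D).card : ℝ) ≤
      Real.exp (D * (1 + Real.log (t / D))) := by
  have hD0 : (0:ℝ) < D := by exact_mod_cast hD
  have ht0 : 0 < t := hD0.trans_le hDt
  set x : ℝ := D / t with hx
  have hx0 : 0 < x := by positivity
  have hx1 : x ≤ 1 := by rw [hx, div_le_one ht0]; exact hDt
  have h1 : ((R.powerset.filter fun B => B.card ≤ D).card : ℝ) * x ^ D ≤ Real.exp D := by
    calc ((R.powerset.filter fun B => B.card ≤ D).card : ℝ) * x ^ D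
        = ∑ B ∈ R.powerset.filter (fun B => B.card ≤ D), x ^ D := by simp
      _ ≤ ∑ B ∈ R.powerset.filter (fun B => B.card ≤ D), x ^ B.card :=
          Finset.sum_le_sum fun B hB =>
            pow_le_pow_of_le_one hx0.le hx1 (Finset.mem_filter.1 hB).2
      _ ≤ ∑ B ∈ R.powerset, x ^ B.card :=
          Finset.sum_le_sum_of_subset_of_nonneg (Finset.filter_subset _ _)
            fun _ _ _ => by positivity
      _ = (x + 1) ^ R.card := by
          have := Finset.sum_pow_mul_eq_add_pow x 1 R
          simpa using this
      _ ≤ (Real.exp x) ^ R.card := by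
          gcongr; exact Real.add_one_le_exp x
      _ = Real.exp (R.card * x) := by rw [← Real.exp_nat_mul]
      _ ≤ Real.exp D := by
          apply Real.exp_le_exp.2
          calc (R.card : ℝ) * x ≤ t * x := by gcongr
            _ = D := by rw [hx]; field_simp
  have h2 : Real.exp (D * (1 + Real.log (t / D))) * x ^ D = Real.exp D := by
    have : x ^ D = Real.exp (D * Real.log x) := by
      rw [Real.exp_nat_mul, Real.exp_log hx0]
    rw [this, ← Real.exp_add]
    have h3 : Real.log x = - Real.log (t / D) := by
      rw [← Real.log_inv, inv_div]
    rw [h3]; ring_nf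
  rw [← h2] at h1
  exact le_of_mul_le_mul_right h1 (by positivity)

open Classical in
/-- Points below the hyperplane. -/
def Aset {d n : ℕ} (x : Fin n → EuclideanSpace ℝ (Fin d)) (y : Fin n → ℝ)
    (b : EuclideanSpace ℝ (Fin d)) : Finset (Fin n) :=
  Finset.univ.filter fun i => y i < inner ℝ (x i) b

theorem vc_bound {d n : ℕ} (x : Fin n → EuclideanSpace ℝ (Fin d)) (y : Fin n → ℝ)
    (S : Finset (Fin n)) (hS : ∀ t ⊆ S, ∃ b, S ∩ Aset x y b = t) : S.card ≤ d + 1 := by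
  classical
  by_contra! hcard
  let z : S → EuclideanSpace ℝ (Fin d) × ℝ := fun i => (x i, y i)
  have hli : ¬ LinearIndependent ℝ z := by
    intro h
    have := h.fintype_card_le_finrank
    simp at this
    omega
  obtain ⟨g, hg, i0, hi0⟩ := Fintype.not_linearIndependent_iff.1 hli
  have key : ∀ g : S → ℝ, ∑ i, g i • z i = 0 → ∀ i0, 0 < g i0 → False := by
    intro g hg i0 hi0
    obtain ⟨b, hb⟩ := hS (S.filter fun i => ∃ h : i ∈ S, 0 < g ⟨i, h⟩) (Finset.filter_subset _ _)
    have hmem : ∀ i : S, y i < inner ℝ (x i) b ↔ 0 < g i := by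
      intro i
      have := Finset.ext_iff.1 hb i
      simp only [Aset, Finset.mem_inter, Finset.mem_filter, Finset.mem_univ, true_and, i.2,
        exists_true_left, Subtype.coe_eta] at this
      exact this
    have h1 : ∑ i, g i • (x i : EuclideanSpace ℝ (Fin d)) = 0 := by
      have := congrArg Prod.fst hg
      simpa [z, Prod.fst_sum] using this
    have h2 : ∑ i, g i * (y i) = 0 := by
      have := congrArg Prod.snd hg
      simpa [z, Prod.snd_sum] using this
    have h3 : ∑ i, g i * (inner ℝ (x i) b - y i) = 0 := by
      simp_rw [mul_sub, Finset.sum_sub_distrib]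
      rw [h2, sub_zero]
      have := congrArg (fun u => inner ℝ u b) h1
      simpa [sum_inner, real_inner_smul_left] using this
    have h4 : 0 < ∑ i, g i * (inner ℝ (x i) b - y i) := by
      apply Finset.sum_pos'
      · intro i _
        by_cases h : 0 < g i
        · have := (hmem i).2 h
          exact mul_nonneg h.le (by linarith)
        · have h' := mt (hmem i).1 h
          exact mul_nonneg_of_nonpos_of_nonpos (not_lt.1 h) (by linarith [not_lt.1 h'])
      · exact ⟨i0, Finset.mem_univ _, mul_pos hi0 (by linarith [(hmem i0).2 hi0])⟩
    linarith
  rcases lt_or_gt_of_ne hi0 with h | h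
  · apply key (fun i => - g i) _ i0 (by linarith)
    rw [Finset.sum_congr rfl (fun i _ => neg_smul (g i) (z i)), Finset.sum_neg_distrib, hg, neg_zero]
  · exact key g hg i0 h

theorem num_aux (k : ℕ) : (25:ℝ) * 1024 ^ k ≤ Real.exp (4 + 7 * k) := by
  have he := Real.exp_one_gt_d9
  have h4 : (25:ℝ) ≤ Real.exp 4 := by
    have : Real.exp 4 = Real.exp 1 ^ 4 := by rw [← Real.exp_nat_mul]; norm_num
    rw [this]
    calc (25:ℝ) ≤ 2.7 ^ 4 := by norm_num
      _ ≤ _ := by gcongr; linarith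
  have h7 : (1024:ℝ) ≤ Real.exp 7 := by
    have : Real.exp 7 = Real.exp 1 ^ 7 := by rw [← Real.exp_nat_mul]; norm_num
    rw [this]
    calc (1024:ℝ) ≤ 2.718 ^ 7 := by norm_num
      _ ≤ _ := by gcongr; linarith
  rw [Real.exp_add, mul_comm 7 (k:ℝ), Real.exp_nat_mul]
  gcongr

open Classical in
theorem packing {d n : ℕ} (hn : 0 < n) (x : Fin n → EuclideanSpace ℝ (Fin d)) (y : Fin n → ℝ)
    (C : Finset (Finset (Fin n))) (hC : ∀ A ∈ C, ∃ b, A = Aset x y b) (k : ℕ)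
    (hsep : ∀ A ∈ C, ∀ A' ∈ C, A ≠ A' → (n:ℝ) / 256 ^ k < ((symmDiff A A').card : ℝ)) :
    (C.card : ℝ) ≤ Real.exp (8 * (d + 1) * 4 ^ k) := by
  by_contra! hcon
  set E : ℝ := 8 * (d + 1) * 4 ^ k with hE
  have h4k : (1:ℝ) + 3 * k ≤ 4 ^ k := by
    have := one_add_mul_le_pow (a := (3:ℝ)) (by norm_num) k
    norm_num at this
    linarith
  have hd1 : (1:ℝ) ≤ d + 1 := by linarith [Nat.cast_nonneg (α := ℝ) d]
  have hE8 : 8 ≤ E := by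
    rw [hE]
    have : (1:ℝ) ≤ 4 ^ k := by linarith [Nat.cast_nonneg (α := ℝ) k]
    nlinarith
  obtain ⟨C', hC'C, hC'card⟩ : ∃ C' ⊆ C, C'.card = ⌊Real.exp E⌋₊ + 1 := by
    apply Finset.exists_subset_card_eq
    exact (Nat.floor_lt (Real.exp_pos _).le).2 hcon
  have hN1 : Real.exp E < C'.card := by
    rw [hC'card]; push_cast; exact Nat.lt_floor_add_one _
  have hN2 : (C'.card : ℝ) ≤ 2 * Real.exp E := by
    rw [hC'card]; push_cast
    have := Nat.floor_le (Real.exp_pos E).le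
    have := Real.add_one_le_exp E
    linarith
  set t : ℕ := ⌈3 * E * 256 ^ k⌉₊ with ht
  have ht1 : 3 * E * 256 ^ k ≤ t := Nat.le_ceil _
  have ht2 : (t:ℝ) < 3 * E * 256 ^ k + 1 := Nat.ceil_lt_add_one (by positivity)
  have hn0 : (0:ℝ) < n := by exact_mod_cast hn
  obtain ⟨f, hf⟩ : ∃ f : Fin t → Fin n, ∀ A ∈ C', ∀ A' ∈ C', A ≠ A' →
      ∃ j, f j ∈ symmDiff A A' := by
    by_contra! hno
    have hcover : (Finset.univ : Finset (Fin t → Fin n)) ⊆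
        (C'.offDiag).biUnion fun p => Fintype.piFinset fun _ : Fin t => (symmDiff p.1 p.2)ᶜ := by
      intro f _
      obtain ⟨A, hA, A', hA', hne, hj⟩ := hno f
      refine Finset.mem_biUnion.2 ⟨(A, A'), Finset.mem_offDiag.2 ⟨hA, hA', hne⟩, ?_⟩
      rw [Fintype.mem_piFinset]
      intro j
      exact Finset.mem_compl.2 (hj j)
    have h1 : ((n:ℝ)) ^ t ≤ ∑ p ∈ C'.offDiag,
        ((Fintype.piFinset fun _ : Fin t => (symmDiff p.1 p.2)ᶜ).card : ℝ) := by
      have := (Finset.card_le_card hcover).trans Finset.card_biUnion_le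
      rw [Finset.card_univ, Fintype.card_fun, Fintype.card_fin, Fintype.card_fin] at this
      exact_mod_cast this
    have h2 : ∀ p ∈ C'.offDiag,
        ((Fintype.piFinset fun _ : Fin t => (symmDiff p.1 p.2)ᶜ).card : ℝ)
          ≤ (n:ℝ) ^ t * Real.exp (-(3 * E)) := by
      intro p hp
      obtain ⟨hp1, hp2, hp3⟩ := Finset.mem_offDiag.1 hp
      have hs := hsep _ (hC'C hp1) _ (hC'C hp2) hp3
      rw [Fintype.card_piFinset, Finset.prod_const, Finset.card_univ, Fintype.card_fin]
      have hc : (((symmDiff p.1 p.2)ᶜ.card : ℕ) : ℝ) ≤ n * Real.exp (-(1 / 256 ^ k)) := by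
        have h := Finset.card_add_card_compl (symmDiff p.1 p.2)
        rw [Fintype.card_fin] at h
        have h' : ((symmDiff p.1 p.2).card : ℝ) + ((symmDiff p.1 p.2)ᶜ.card : ℝ) = n := by
          exact_mod_cast h
        have he := Real.add_one_le_exp (-(1 / (256:ℝ) ^ k))
        have : (n:ℝ) / 256 ^ k = n * (1 / 256 ^ k) := by ring
        nlinarith
      push_cast
      calc (((symmDiff p.1 p.2)ᶜ.card : ℕ) : ℝ) ^ t ≤ (n * Real.exp (-(1 / 256 ^ k))) ^ t := by
            gcongr
        _ = (n:ℝ) ^ t * Real.exp (-(t * (1 / 256 ^ k))) := by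
            rw [mul_pow, ← Real.exp_nat_mul]; ring_nf
        _ ≤ _ := by
            refine mul_le_mul_of_nonneg_left (Real.exp_le_exp.2 (neg_le_neg ?_)) (by positivity)
            rw [mul_one_div, le_div_iff₀ (by positivity)]
            exact ht1
    have h3 := h1.trans (Finset.sum_le_sum h2)
    rw [Finset.sum_const, nsmul_eq_mul] at h3
    have h4 : (C'.offDiag.card : ℝ) ≤ 4 * Real.exp (2 * E) := by
      have : C'.offDiag.card ≤ C'.card * C'.card := by
        rw [Finset.offDiag_card]; omega
      have h5 : (C'.offDiag.card : ℝ) ≤ C'.card * C'.card := by exact_mod_cast this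
      have h6 : Real.exp (2 * E) = Real.exp E * Real.exp E := by rw [← Real.exp_add]; ring_nf
      rw [h6]
      have := Real.exp_pos E
      nlinarith
    have hnt : (0:ℝ) < (n:ℝ) ^ t := by positivity
    have h5 : (1:ℝ) ≤ 4 * Real.exp (2 * E) * Real.exp (-(3 * E)) := by
      have h6 : (C'.offDiag.card : ℝ) * ((n:ℝ) ^ t * Real.exp (-(3 * E)))
          ≤ 4 * Real.exp (2 * E) * ((n:ℝ) ^ t * Real.exp (-(3 * E))) := by gcongr
      have h7 := h3.trans h6
      have h8 : (n:ℝ) ^ t * 1 ≤ (n:ℝ) ^ t * (4 * Real.exp (2 * E) * Real.exp (-(3 * E))) := by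
        linarith
      exact le_of_mul_le_mul_left h8 hnt
    rw [mul_assoc, ← Real.exp_add] at h5
    have h6 : 2 * E + -(3 * E) = -E := by ring
    rw [h6, Real.exp_neg] at h5
    have h7 := Real.add_one_le_exp E
    have h8 : 4 * (Real.exp E)⁻¹ < 1 := by
      rw [← div_eq_mul_inv, div_lt_one (Real.exp_pos _)]; linarith
    linarith
  set R : Finset (Fin n) := Finset.univ.image f with hR
  have hRcard : (R.card : ℝ) ≤ t := by
    have : R.card ≤ t := by
      simpa using (Finset.card_image_le (s := (Finset.univ : Finset (Fin t))) (f := f))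
    exact_mod_cast this
  have hinj : Set.InjOn (fun A => A ∩ R) (C' : Set (Finset (Fin n))) := by
    intro A hA A' hA' heq
    by_contra hne
    obtain ⟨j, hj⟩ := hf A hA A' hA' hne
    have hjR : f j ∈ R := Finset.mem_image_of_mem _ (Finset.mem_univ _)
    have := Finset.ext_iff.1 heq (f j)
    simp only [Finset.mem_inter, hjR, and_true] at this
    rw [Finset.mem_symmDiff] at hj
    tauto
  have hcard1 : C'.card = (C'.image (fun A => A ∩ R)).card :=
    (Finset.card_image_of_injOn hinj).symm
  have hsh : (C'.image (fun A => A ∩ R)).shatterer ⊆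
      R.powerset.filter fun B => B.card ≤ d + 1 := by
    intro S hS
    rw [Finset.mem_shatterer] at hS
    have hSR : S ⊆ R := by
      obtain ⟨u, hu, hSu⟩ := hS.exists_superset
      obtain ⟨A, _, rfl⟩ := Finset.mem_image.1 hu
      exact hSu.trans Finset.inter_subset_right
    refine Finset.mem_filter.2 ⟨Finset.mem_powerset.2 hSR, vc_bound x y S ?_⟩
    intro q hq
    obtain ⟨u, hu, hSu⟩ := hS hq
    obtain ⟨A, hA, rfl⟩ := Finset.mem_image.1 hu
    obtain ⟨b, rfl⟩ := hC A (hC'C hA)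
    refine ⟨b, ?_⟩
    rw [← hSu]
    ext i
    simp only [Finset.mem_inter]
    constructor
    · rintro ⟨h1, h2⟩; exact ⟨h1, h2, hSR h1⟩
    · rintro ⟨h1, h2, _⟩; exact ⟨h1, h2⟩
  have hle : (C'.card : ℝ) ≤ ((R.powerset.filter fun B => B.card ≤ d + 1).card : ℝ) := by
    rw [hcard1]
    exact_mod_cast (Finset.card_le_card_shatterer _).trans (Finset.card_le_card hsh)
  have h256 : (1:ℝ) ≤ 256 ^ k := one_le_pow₀ (by norm_num)
  have h1024 : (1024:ℝ) ^ k = 4 ^ k * 256 ^ k := by rw [← mul_pow]; norm_num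
  have hDt : (((d+1 : ℕ)) : ℝ) ≤ t := by
    push_cast
    have h1k : (1:ℝ) ≤ 4 ^ k := by linarith [Nat.cast_nonneg (α := ℝ) k]
    have : (d:ℝ) + 1 ≤ E := by rw [hE]; nlinarith
    nlinarith
  have hcount := subset_count R (d + 1) t (by omega) hDt hRcard
  have hlog : Real.log ((t:ℝ) / ((d + 1 : ℕ) : ℝ)) ≤ 4 + 7 * k := by
    have hpos : 0 < (t:ℝ) / ((d + 1 : ℕ) : ℝ) := by
      push_cast at hDt ⊢
      apply div_pos <;> linarith
    rw [Real.log_le_iff_le_exp hpos]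
    refine le_trans ?_ (num_aux k)
    rw [div_le_iff₀ (by positivity)]
    push_cast
    have h1 : (1:ℝ) ≤ 1024 ^ k := one_le_pow₀ (by norm_num)
    have h2 : 3 * E * 256 ^ k = 24 * 1024 ^ k * (d + 1) := by rw [h1024, hE]; ring
    nlinarith
  have hfin : Real.exp (((d + 1 : ℕ) : ℝ) * (1 + Real.log ((t:ℝ) / ((d + 1 : ℕ) : ℝ))))
      ≤ Real.exp E := by
    apply Real.exp_le_exp.2
    push_cast at hlog ⊢
    rw [hE]
    have : 1 + Real.log ((t:ℝ) / (d + 1)) ≤ 8 * 4 ^ k := by linarith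
    nlinarith
  linarith

/-- Signed sums over a subset. -/
def Tsum {d n : ℕ} (x : Fin n → EuclideanSpace ℝ (Fin d)) (e : Fin n → Bool)
    (A : Finset (Fin n)) : EuclideanSpace ℝ (Fin d) := ∑ i ∈ A, sg (e i) • x i

/-- Coefficients of a link. -/
def lk {n : ℕ} (A B : Finset (Fin n)) (i : Fin n) : ℝ :=
  (if i ∈ A then 1 else 0) - (if i ∈ B then 1 else 0)

theorem Tsum_sub {d n : ℕ} (x : Fin n → EuclideanSpace ℝ (Fin d)) (e : Fin n → Bool)
    (A B : Finset (Fin n)) :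
    Tsum x e A - Tsum x e B = ∑ i, sg (e i) • (lk A B i • x i) := by
  have h : ∀ A : Finset (Fin n), Tsum x e A = ∑ i, (if i ∈ A then (1:ℝ) else 0) • (sg (e i) • x i) := by
    intro A
    simp [Tsum, ite_smul]
  rw [h, h, ← Finset.sum_sub_distrib]
  refine Finset.sum_congr rfl fun i _ => ?_
  rw [← sub_smul, smul_comm]
  rfl

theorem lk_sq {n : ℕ} (A B : Finset (Fin n)) (i : Fin n) :
    lk A B i ^ 2 = if i ∈ symmDiff A B then 1 else 0 := by
  by_cases h1 : i ∈ A <;> by_cases h2 : i ∈ B <;> simp [lk, h1, h2, Finset.mem_symmDiff]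

theorem lk_quad {d n : ℕ} (x : Fin n → EuclideanSpace ℝ (Fin d))
    (A B : Finset (Fin n)) (v : EuclideanSpace ℝ (Fin d)) :
    ∑ i, (inner ℝ (lk A B i • x i) v) ^ 2 = ∑ i ∈ symmDiff A B, (inner ℝ (x i) v) ^ 2 := by
  simp_rw [real_inner_smul_left, mul_pow, lk_sq]
  simp [ite_mul]

theorem sg_sq (b : Bool) : sg b ^ 2 = 1 := by cases b <;> simp [sg]

theorem det_bound {d n : ℕ} (x : Fin n → EuclideanSpace ℝ (Fin d)) (e : Fin n → Bool)
    (A B : Finset (Fin n)) (V : ℝ)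
    (hV : ∀ v, ∑ i ∈ symmDiff A B, (inner ℝ (x i) v) ^ 2 ≤ V * ‖v‖ ^ 2) (hV0 : 0 ≤ V) :
    ‖Tsum x e A - Tsum x e B‖ ^ 2 ≤ (symmDiff A B).card * V := by
  set u := Tsum x e A - Tsum x e B with hu
  have h1 : ‖u‖ ^ 2 = ∑ i, (sg (e i) * lk A B i) * inner ℝ (x i) u := by
    rw [← real_inner_self_eq_norm_sq]
    conv_lhs => rw [hu, Tsum_sub]
    rw [sum_inner]
    refine Finset.sum_congr rfl fun i _ => ?_
    rw [real_inner_smul_left, real_inner_smul_left, ← Tsum_sub, ← hu]; ring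
  have h2 : ‖u‖ ^ 2 = ∑ i ∈ symmDiff A B, (sg (e i) * lk A B i) * inner ℝ (x i) u := by
    rw [h1]
    symm
    apply Finset.sum_subset (Finset.subset_univ _)
    intro i _ hi
    have : lk A B i ^ 2 = 0 := by rw [lk_sq, if_neg hi]
    have : lk A B i = 0 := by simpa using this
    simp [this]
  have h3 : (‖u‖ ^ 2) ^ 2 ≤ (symmDiff A B).card * (V * ‖u‖ ^ 2) := by
    rw [h2]
    refine (Finset.sum_mul_sq_le_sq_mul_sq _ _ _).trans ?_
    rw [← h2]
    have h4 : ∑ i ∈ symmDiff A B, (sg (e i) * lk A B i) ^ 2 = (symmDiff A B).card := by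
      rw [Finset.sum_congr rfl (g := fun _ => (1:ℝ))]
      · simp
      · intro i hi
        rw [mul_pow, sg_sq, lk_sq, if_pos hi]; norm_num
    rw [h4]
    exact mul_le_mul_of_nonneg_left (hV u) (by positivity)
  by_cases h0 : ‖u‖ = 0
  · rw [h0]; norm_num; positivity
  · have : 0 < ‖u‖ ^ 2 := by positivity
    nlinarith

open Classical in
theorem max_sep {n : ℕ} (F : Finset (Finset (Fin n))) (m : ℝ) (hm : 0 ≤ m) : ∃ C ⊆ F,
    (∀ A ∈ C, ∀ A' ∈ C, A ≠ A' → m < ((symmDiff A A').card : ℝ)) ∧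
    ∀ A ∈ F, ∃ B ∈ C, ((symmDiff A B).card : ℝ) ≤ m := by
  let P := F.powerset.filter fun C => ∀ A ∈ C, ∀ A' ∈ C, A ≠ A' → m < ((symmDiff A A').card : ℝ)
  obtain ⟨C, hC, hmax⟩ := Finset.exists_max_image P Finset.card
    ⟨∅, Finset.mem_filter.2 ⟨by simp, by simp⟩⟩
  obtain ⟨hC1, hC2⟩ := Finset.mem_filter.1 hC
  refine ⟨C, Finset.mem_powerset.1 hC1, hC2, ?_⟩
  intro A hA
  by_contra! hcon
  have hAC : A ∉ C := fun h => by
    have := hcon A h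
    simp at this
    linarith
  have : insert A C ∈ P := by
    refine Finset.mem_filter.2 ⟨Finset.mem_powerset.2
      (Finset.insert_subset hA (Finset.mem_powerset.1 hC1)), ?_⟩
    intro B hB B' hB' hne
    rcases Finset.mem_insert.1 hB with rfl | h <;> rcases Finset.mem_insert.1 hB' with rfl | h'
    · exact absurd rfl hne
    · exact hcon _ h'
    · rw [symmDiff_comm]; exact hcon _ h
    · exact hC2 _ h _ h' hne
  have := hmax _ this
  rw [Finset.card_insert_of_notMem hAC] at this
  omega

/-- Uniform bound for the sub-Gram matrices. -/
def GramOK {d n : ℕ} (H : ℝ) (x : Fin n → EuclideanSpace ℝ (Fin d)) : Prop :=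
  ∀ (B : Finset (Fin n)) (v : EuclideanSpace ℝ (Fin d)),
    ∑ i ∈ B, (inner ℝ (x i) v) ^ 2 ≤ H * (Real.sqrt (n * B.card) + d) * ‖v‖ ^ 2

theorem GramOK.quad {d n : ℕ} {H : ℝ} (hH : 0 ≤ H) {x : Fin n → EuclideanSpace ℝ (Fin d)}
    (hx : GramOK H x) (B : Finset (Fin n)) (m : ℝ) (hm : (B.card : ℝ) ≤ m)
    (v : EuclideanSpace ℝ (Fin d)) :
    ∑ i ∈ B, (inner ℝ (x i) v) ^ 2 ≤ H * (Real.sqrt (n * m) + d) * ‖v‖ ^ 2 := by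
  refine (hx B v).trans ?_
  gcongr

open Classical in
theorem link_step {d n : ℕ} (hd : 0 < d) (H : ℝ) (hH : 0 < H)
    (x : Fin n → EuclideanSpace ℝ (Fin d)) (hx : GramOK H x) (k : ℕ)
    (hk : (256:ℝ) ^ k * d ≤ n) (C : Finset (Finset (Fin n)))
    (hC : (C.card : ℝ) ≤ Real.exp (16 * d * 4 ^ k)) (p : Finset (Fin n) → Finset (Fin n))
    (hp : ∀ B ∈ C, ((symmDiff B (p B)).card : ℝ) ≤ 256 * (n / 256 ^ k)) :
    ((Finset.univ.filter fun e : Fin n → Bool => ∃ B ∈ C,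
      2 * Real.sqrt (816 * H * n * d) / 2 ^ k < ‖Tsum x e B - Tsum x e (p B)‖).card : ℝ)
      ≤ 2 ^ n * Real.exp (-(5 * d)) * (1 / 2) ^ (k + 1) := by
  have hd1 : (1:ℝ) ≤ d := by exact_mod_cast hd
  have h256 : (256:ℝ) ^ k = 16 ^ k * 16 ^ k := by rw [← mul_pow]; norm_num
  have h16 : (16:ℝ) ^ k = 4 ^ k * 4 ^ k := by rw [← mul_pow]; norm_num
  have h4 : (4:ℝ) ^ k = 2 ^ k * 2 ^ k := by rw [← mul_pow]; norm_num
  have h16p : (1:ℝ) ≤ 16 ^ k := one_le_pow₀ (by norm_num)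
  have h4p : (1:ℝ) + 3 * k ≤ 4 ^ k := by
    have := one_add_mul_le_pow (a := (3:ℝ)) (by norm_num) k
    norm_num at this
    linarith
  have hn0 : (0:ℝ) < n := lt_of_lt_of_le (by positivity) hk
  set V : ℝ := 17 * H * n / 16 ^ k with hV
  set s : ℝ := 24 * d * 4 ^ k with hs
  have hVpos : 0 < V := by positivity
  have hdn : (d:ℝ) ≤ n / 16 ^ k := by
    rw [le_div_iff₀ (by positivity)]
    rw [h256] at hk
    nlinarith
  have hsub : (Finset.univ.filter fun e : Fin n → Bool => ∃ B ∈ C,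
      2 * Real.sqrt (816 * H * n * d) / 2 ^ k < ‖Tsum x e B - Tsum x e (p B)‖) ⊆
      C.biUnion fun B => (Finset.univ.filter fun e : Fin n → Bool =>
        2 * Real.sqrt (2 * V * s) < ‖∑ i, sg (e i) • (lk B (p B) i • x i)‖) := by
    intro e he
    obtain ⟨B, hB, h⟩ := (Finset.mem_filter.1 he).2
    refine Finset.mem_biUnion.2 ⟨B, hB, Finset.mem_filter.2 ⟨Finset.mem_univ _, ?_⟩⟩
    rw [← Tsum_sub]
    convert h using 1
    rw [mul_div_assoc]
    congr 1
    have : 2 * V * s = 816 * H * n * d / (2 ^ k) ^ 2 := by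
      rw [hV, hs, h16, h4]; field_simp; ring
    rw [this, Real.sqrt_div (by positivity), Real.sqrt_sq (by positivity)]
  have hone : ∀ B ∈ C, ((Finset.univ.filter fun e : Fin n → Bool =>
        2 * Real.sqrt (2 * V * s) < ‖∑ i, sg (e i) • (lk B (p B) i • x i)‖).card : ℝ)
        ≤ 5 ^ d * (2 ^ n * Real.exp (-s)) := by
    intro B hB
    apply sign_vec_tail _ V s hVpos (by positivity)
    intro v hv
    rw [lk_quad]
    refine (hx.quad hH.le _ _ (hp B hB) v).trans ?_
    have h1 : Real.sqrt (n * (256 * (n / 256 ^ k))) = 16 * n / 16 ^ k := by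
      have : (n:ℝ) * (256 * (n / 256 ^ k)) = (16 * n / 16 ^ k) ^ 2 := by
        rw [h256]; field_simp; ring
      rw [this, Real.sqrt_sq (by positivity)]
    rw [h1]
    have h2 : ‖v‖ ^ 2 ≤ 1 := pow_le_one₀ (norm_nonneg _) hv
    have h3 : H * (16 * n / 16 ^ k + d) ≤ V := by
      have : V = H * (16 * n / 16 ^ k + n / 16 ^ k) := by rw [hV]; ring
      rw [this]; gcongr
    have h5 : 0 ≤ H * (16 * n / 16 ^ k + d) := by positivity
    nlinarith [sq_nonneg ‖v‖]
  have h5d : (5:ℝ) ^ d ≤ Real.exp (2 * d) := by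
    rw [mul_comm, Real.exp_nat_mul]
    gcongr
    have := Real.quadratic_le_exp_of_nonneg (x := 2) (by norm_num)
    linarith
  calc _ ≤ ((C.biUnion fun B => (Finset.univ.filter fun e : Fin n → Bool =>
        2 * Real.sqrt (2 * V * s) < ‖∑ i, sg (e i) • (lk B (p B) i • x i)‖)).card : ℝ) := by
        exact_mod_cast Finset.card_le_card hsub
    _ ≤ ∑ B ∈ C, ((Finset.univ.filter fun e : Fin n → Bool =>
        2 * Real.sqrt (2 * V * s) < ‖∑ i, sg (e i) • (lk B (p B) i • x i)‖).card : ℝ) := by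
        exact_mod_cast Finset.card_biUnion_le
    _ ≤ ∑ B ∈ C, 5 ^ d * (2 ^ n * Real.exp (-s)) := Finset.sum_le_sum hone
    _ = C.card * (5 ^ d * (2 ^ n * Real.exp (-s))) := by simp
    _ ≤ Real.exp (16 * d * 4 ^ k) * (Real.exp (2 * d) * (2 ^ n * Real.exp (-s))) := by gcongr
    _ = 2 ^ n * Real.exp (16 * d * 4 ^ k + 2 * d - s) := by
        rw [sub_eq_add_neg, Real.exp_add, Real.exp_add]; ring
    _ ≤ 2 ^ n * (Real.exp (-(5 * d)) * Real.exp (-((k + 1 : ℕ) : ℝ))) := by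
        rw [← Real.exp_add]
        refine mul_le_mul_of_nonneg_left (Real.exp_le_exp.2 ?_) (by positivity)
        rw [hs]
        push_cast
        have : (0:ℝ) ≤ k := Nat.cast_nonneg _
        nlinarith
    _ ≤ _ := by
        rw [mul_assoc]
        have : Real.exp (-((k + 1 : ℕ) : ℝ)) ≤ (1/2) ^ (k+1) := by
          have h : Real.exp (-((k + 1 : ℕ) : ℝ)) = (Real.exp (-1)) ^ (k+1) := by
            rw [← Real.exp_nat_mul]; congr 1; ring
          rw [h]
          gcongr
          rw [Real.exp_neg, inv_eq_one_div]
          have := Real.exp_one_gt_d9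
          gcongr
          linarith
        gcongr

open Classical in
theorem chain_ind {d n : ℕ} (hd : 0 < d) (H : ℝ) (hH : 0 < H)
    (x : Fin n → EuclideanSpace ℝ (Fin d)) (hx : GramOK H x) (F : Finset (Finset (Fin n)))
    (hF : ∀ k : ℕ, ∀ C ⊆ F,
      (∀ A ∈ C, ∀ A' ∈ C, A ≠ A' → (n:ℝ) / 256 ^ k < ((symmDiff A A').card : ℝ)) →
      (C.card : ℝ) ≤ Real.exp (16 * d * 4 ^ k)) (k : ℕ) (hk : (256:ℝ) ^ k * d ≤ n) :
    ∃ C ⊆ F, (∀ A ∈ F, ∃ B ∈ C, ((symmDiff A B).card : ℝ) ≤ n / 256 ^ k) ∧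
    ((Finset.univ.filter fun e : Fin n → Bool => ∃ B ∈ C,
      2 * Real.sqrt (816 * H * n * d) * ∑ j ∈ Finset.range (k+1), (1/2:ℝ) ^ j < ‖Tsum x e B‖).card : ℝ)
      ≤ 2 ^ n * Real.exp (-(5 * d)) * ∑ j ∈ Finset.range (k+1), (1 / 2 : ℝ) ^ (j + 1) := by
  induction k with
  | zero =>
    obtain ⟨C, hC, hsep, hcov⟩ := max_sep F ((n:ℝ) / 256 ^ 0) (by positivity)
    refine ⟨C, hC, hcov, ?_⟩
    have h := link_step hd H hH x hx 0 hk C (hF 0 C hC hsep) (fun _ => ∅) ?_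
    · simpa [Tsum] using h
    · intro B _
      have : (symmDiff B ∅).card ≤ n := by
        simpa using Finset.card_le_univ (symmDiff B ∅)
      have : ((symmDiff B ∅).card : ℝ) ≤ n := by exact_mod_cast this
      simp only [pow_zero, div_one]
      linarith [Nat.cast_nonneg (α := ℝ) n]
  | succ k ih =>
    have hk' : (256:ℝ) ^ k * d ≤ n := by
      refine le_trans ?_ hk
      gcongr <;> norm_num
    obtain ⟨C0, hC0, hcov0, hcard0⟩ := ih hk'
    obtain ⟨C, hC, hsep, hcov⟩ := max_sep F ((n:ℝ) / 256 ^ (k+1)) (by positivity)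
    refine ⟨C, hC, hcov, ?_⟩
    choose! p hp1 hp2 using hcov0
    have h := link_step hd H hH x hx (k+1) hk C (hF _ C hC hsep) p ?_
    · rw [Finset.sum_range_succ _ (k+1), Finset.sum_range_succ _ (k+1), mul_add, mul_add]
      refine le_trans ?_ (add_le_add hcard0 h)
      rw [← Nat.cast_add]
      refine Nat.cast_le.2 (le_trans (Finset.card_le_card ?_) (Finset.card_union_le _ _))
      intro e he
      obtain ⟨B, hB, hlt⟩ := (Finset.mem_filter.1 he).2
      rw [Finset.mem_union]
      by_contra hno
      push Not at hno
      obtain ⟨h1, h2⟩ := hno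
      simp only [Finset.mem_filter, Finset.mem_univ, true_and, not_exists, not_and, not_lt] at h1 h2
      have h3 := h1 (p B) (hp1 B (hC hB))
      have h4 := h2 B hB
      have h5 : ‖Tsum x e B‖ ≤ ‖Tsum x e (p B)‖ + ‖Tsum x e B - Tsum x e (p B)‖ := by
        have := norm_add_le (Tsum x e (p B)) (Tsum x e B - Tsum x e (p B))
        simpa using this
      have h6 : 2 * Real.sqrt (816 * H * n * d) / 2 ^ (k+1)
          = 2 * Real.sqrt (816 * H * n * d) * (1/2) ^ (k+1) := by
        rw [div_pow, one_pow]; ring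
      linarith
    · intro B hB
      refine (hp2 B (hC hB)).trans (le_of_eq ?_)
      rw [pow_succ]; field_simp

theorem geo_le (k : ℕ) : ∑ j ∈ Finset.range k, (1/2:ℝ) ^ j ≤ 2 := by
  have := geom_sum_eq (x := (1/2:ℝ)) (by norm_num) k
  rw [this]
  have : (0:ℝ) ≤ (1/2)^k := by positivity
  rw [div_le_iff_of_neg (by norm_num)]
  linarith

open Classical in
theorem chain_main {d n : ℕ} (hd : 0 < d) (hn : 0 < n) (H : ℝ) (hH : 0 < H)
    (x : Fin n → EuclideanSpace ℝ (Fin d)) (hx : GramOK H x) (F : Finset (Finset (Fin n)))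
    (hF : ∀ k : ℕ, ∀ C ⊆ F,
      (∀ A ∈ C, ∀ A' ∈ C, A ≠ A' → (n:ℝ) / 256 ^ k < ((symmDiff A A').card : ℝ)) →
      (C.card : ℝ) ≤ Real.exp (16 * d * 4 ^ k)) :
    ((Finset.univ.filter fun e : Fin n → Bool => ∃ B ∈ F,
      182 * Real.sqrt (H * n * d) < ‖Tsum x e B‖).card : ℝ) ≤ 2 ^ n * Real.exp (-(5 * d)) := by
  have hd1 : (1:ℝ) ≤ d := by exact_mod_cast hd
  have hn1 : (1:ℝ) ≤ n := by exact_mod_cast hn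
  set r := Real.sqrt (H * n * d) with hr
  have hr2 : r ^ 2 = H * n * d := Real.sq_sqrt (by positivity)
  have hr0 : 0 ≤ r := Real.sqrt_nonneg _
  rcases lt_or_ge n d with hnd | hnd
  · have hnd' : (n:ℝ) ≤ d := by exact_mod_cast hnd.le
    rw [Finset.filter_false_of_mem]
    · simp; positivity
    · rintro e - ⟨B, hB, hlt⟩
      have h1 := det_bound x e B ∅ (H * (Real.sqrt (n * n) + d))
        (fun v => hx.quad hH.le _ _ (by
          have := Finset.card_le_univ (symmDiff B ∅)
          rw [Fintype.card_fin] at this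
          exact_mod_cast this) v) (by positivity)
      rw [Real.sqrt_mul_self (by positivity)] at h1
      have h2 : ((symmDiff B ∅).card : ℝ) ≤ n := by
        have := Finset.card_le_univ (symmDiff B ∅)
        rw [Fintype.card_fin] at this
        exact_mod_cast this
      simp only [Tsum, Finset.sum_empty, sub_zero] at h1
      have h3 : ((symmDiff B ∅).card : ℝ) * (H * (n + d)) ≤ n * (H * (d + d)) := by gcongr
      have h4 : ‖Tsum x e B‖ ^ 2 ≤ 2 * r ^ 2 := by
        rw [hr2]; unfold Tsum; linarith
      have h5 : (182 * r) ^ 2 < ‖Tsum x e B‖ ^ 2 := by gcongr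
      nlinarith [sq_nonneg r]
  · have hnd' : (d:ℝ) ≤ n := by exact_mod_cast hnd
    obtain ⟨K, hK1, hK2⟩ := exists_nat_pow_near (x := (n:ℝ) / d) (y := 256)
      (by rw [le_div_iff₀ (by positivity)]; linarith) (by norm_num)
    rw [le_div_iff₀ (by positivity)] at hK1
    rw [div_lt_iff₀ (by positivity)] at hK2
    obtain ⟨C, hC, hcov, hcard⟩ := chain_ind hd H hH x hx F hF K hK1
    have hsum : ∑ j ∈ Finset.range (K+1), (1 / 2 : ℝ) ^ (j + 1) ≤ 1 := by
      have := geo_le (K+1)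
      simp_rw [pow_succ, ← Finset.sum_mul]
      linarith
    refine le_trans ?_ (hcard.trans (mul_le_of_le_one_right (by positivity) hsum))
    refine Nat.cast_le.2 (Finset.card_le_card ?_)
    intro e he
    obtain ⟨A, hA, hlt⟩ := (Finset.mem_filter.1 he).2
    obtain ⟨B, hB, hAB⟩ := hcov A hA
    refine Finset.mem_filter.2 ⟨Finset.mem_univ _, B, hB, ?_⟩
    have hm : ((symmDiff A B).card : ℝ) ≤ 256 * d := by
      refine hAB.trans ?_
      rw [div_le_iff₀ (by positivity)]
      rw [pow_succ] at hK2
      linarith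
    have h1 := det_bound x e A B (H * (Real.sqrt (n * (256 * d)) + d))
        (fun v => hx.quad hH.le _ _ hm v) (by positivity)
    have h2 : Real.sqrt (n * (256 * d)) ≤ 16 * n := by
      rw [Real.sqrt_le_left (by positivity)]
      nlinarith
    have h3 : ((symmDiff A B).card : ℝ) * (H * (Real.sqrt (n * (256 * d)) + d))
        ≤ (256 * d) * (H * (16 * n + n)) := by gcongr
    have h4 : ‖Tsum x e A - Tsum x e B‖ ^ 2 ≤ (66 * r) ^ 2 := by
      rw [mul_pow, hr2]
      have : 0 ≤ H * n * d := by positivity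
      nlinarith
    have h5 : ‖Tsum x e A - Tsum x e B‖ ≤ 66 * r := abs_le_of_sq_le_sq' h4 (by positivity) |>.2
    have h6 : Real.sqrt (816 * H * n * d) ≤ 29 * r := by
      rw [Real.sqrt_le_left (by positivity), mul_pow, hr2]
      have : 0 ≤ H * n * d := by positivity
      nlinarith
    have h7 : 2 * Real.sqrt (816 * H * n * d) * ∑ j ∈ Finset.range (K+1), (1/2:ℝ) ^ j
        ≤ 2 * (29 * r) * 2 := by
      gcongr
      exact geo_le _
    have h8 : ‖Tsum x e A‖ ≤ ‖Tsum x e B‖ + ‖Tsum x e A - Tsum x e B‖ := by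
      have := norm_add_le (Tsum x e B) (Tsum x e A - Tsum x e B)
      simpa using this
    linarith

open Classical in
theorem cond_main {d n : ℕ} (hd : 0 < d) (hn : 0 < n) (H : ℝ) (hH : 0 < H)
    (x : Fin n → EuclideanSpace ℝ (Fin d)) (y : Fin n → ℝ) (hx : GramOK H x) :
    ((Finset.univ.filter fun e : Fin n → Bool =>
      (∃ b, 182 * Real.sqrt (H * n * d) < ‖Tsum x e (Aset x y b)‖) ∨
        182 * Real.sqrt (H * n * d) < ‖Tsum x e Finset.univ‖).card : ℝ)
      ≤ 2 ^ n * (2 * Real.exp (-(5 * d))) := by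
  have h1 := chain_main hd hn H hH x hx (Finset.univ.filter fun A => ∃ b, A = Aset x y b) ?_
  · have h2 := chain_main hd hn H hH x hx {Finset.univ} ?_
    · have h3 := add_le_add h1 h2
      have h4 : (2:ℝ) ^ n * (2 * Real.exp (-(5 * d))) = 2 ^ n * Real.exp (-(5 * d))
        + 2 ^ n * Real.exp (-(5 * d)) := by ring
      rw [h4]
      refine le_trans ?_ h3
      rw [← Nat.cast_add]
      refine Nat.cast_le.2 (le_trans (Finset.card_le_card ?_) (Finset.card_union_le _ _))
      intro e he
      rw [Finset.mem_union]
      rcases (Finset.mem_filter.1 he).2 with ⟨b, hb⟩ | h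
      · left
        exact Finset.mem_filter.2 ⟨Finset.mem_univ _, Aset x y b,
          Finset.mem_filter.2 ⟨Finset.mem_univ _, b, rfl⟩, hb⟩
      · right
        exact Finset.mem_filter.2 ⟨Finset.mem_univ _, Finset.univ, by simp, h⟩
    · intro k C hC _
      have h5 : C.card ≤ 1 := (Finset.card_le_card hC).trans (by simp)
      have h6 : (C.card : ℝ) ≤ 1 := by exact_mod_cast h5
      exact h6.trans (Real.one_le_exp (by positivity))
  · intro k C hC hsep
    refine (packing hn x y C (fun A hA => (Finset.mem_filter.1 (hC hA)).2) k hsep).trans ?_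
    apply Real.exp_le_exp.2
    have hd1 : (1:ℝ) ≤ d := by exact_mod_cast hd
    have h8 : 8 * ((d:ℝ) + 1) ≤ 16 * d := by linarith
    exact mul_le_mul_of_nonneg_right h8 (by positivity)

theorem gauss_exp_sq : ∫⁻ x, ENNReal.ofReal (Real.exp (x^2/4)) ∂(gaussianReal 0 1) ≤ 2 := by
  rw [gaussianReal_of_var_ne_zero 0 one_ne_zero,
    lintegral_withDensity_eq_lintegral_mul _ (measurable_gaussianPDF 0 1) (by fun_prop)]
  have h : ∀ x, (gaussianPDF 0 1 * fun x => ENNReal.ofReal (Real.exp (x^2/4))) x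
      = ENNReal.ofReal ((Real.sqrt (2*Real.pi))⁻¹ * Real.exp (-(1/4) * x^2)) := by
    intro x
    simp only [Pi.mul_apply, gaussianPDF, gaussianPDFReal]
    rw [← ENNReal.ofReal_mul (by positivity), mul_assoc, ← Real.exp_add]
    congr 2
    · simp
    · simp; ring
  simp_rw [h]
  rw [← ofReal_integral_eq_lintegral_ofReal]
  · rw [integral_const_mul, integral_gaussian]
    rw [show (2:ENNReal) = ENNReal.ofReal 2 by simp]
    apply ENNReal.ofReal_le_ofReal
    have : Real.sqrt (Real.pi / (1/4)) ≤ 2 * Real.sqrt (2 * Real.pi) := by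
      rw [Real.sqrt_le_left (by positivity), mul_pow, Real.sq_sqrt (by positivity)]
      linarith [Real.pi_pos]
    rw [inv_mul_le_iff₀ (by positivity)]
    linarith
  · exact (integrable_exp_neg_mul_sq (by norm_num)).const_mul _
  · exact Filter.Eventually.of_forall fun x => by positivity

theorem gauss_exp_sq' (s : NNReal) (Cu : ℝ) (hCu : 0 < Cu) (hs : (s:ℝ) ≤ Cu) :
    ∫⁻ x, ENNReal.ofReal (Real.exp (x^2/(4*Cu))) ∂(gaussianReal 0 s) ≤ 2 := by
  have h := gaussianReal_map_const_mul (μ := 0) (v := 1) (Real.sqrt s)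
  have e : (gaussianReal (Real.sqrt s * 0) (.mk (Real.sqrt s ^ 2) (sq_nonneg _) * 1)) = gaussianReal 0 s := by
    congr 1
    · simp
    · ext; simp
  rw [e] at h
  rw [← h, lintegral_map (by fun_prop) (by fun_prop)]
  refine le_trans (lintegral_mono fun x => ?_) gauss_exp_sq
  apply ENNReal.ofReal_le_ofReal
  apply Real.exp_le_exp.2
  rw [mul_pow, Real.sq_sqrt (NNReal.coe_nonneg s), div_le_div_iff₀ (by positivity) (by norm_num)]
  nlinarith [mul_le_mul_of_nonneg_right hs (sq_nonneg x)]

theorem chi_tail {d n : ℕ} (P : Fin n → Measure (EuclideanSpace ℝ (Fin d) × ℝ))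
    [∀ i, IsProbabilityMeasure (P i)] (Cu : ℝ) (hCu : 0 < Cu)
    (hP : ∀ i v, ∃ s : NNReal, (s:ℝ) ≤ Cu * ‖v‖^2 ∧
      (P i).map (fun p => inner ℝ p.1 v) = gaussianReal 0 s)
    (B : Finset (Fin n)) (v : EuclideanSpace ℝ (Fin d)) (hv : ‖v‖ ≤ 1) (s : ℝ) :
    Measure.pi P {w | 4 * Cu * s < ∑ i ∈ B, (inner ℝ (w i).1 v)^2}
      ≤ ENNReal.ofReal (2^B.card * Real.exp (-s)) := by
  have hm : ∀ i, ∫⁻ p, ENNReal.ofReal (Real.exp ((inner ℝ p.1 v)^2/(4*Cu))) ∂(P i) ≤ 2 := by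
    intro i
    obtain ⟨σ, h1, h2⟩ := hP i v
    have := gauss_exp_sq' σ Cu hCu (h1.trans (by
      have := pow_le_one₀ (n := 2) (norm_nonneg v) hv
      nlinarith))
    rw [← h2, lintegral_map (by fun_prop) (by fun_prop)] at this
    exact this
  have hI : iIndepFun (fun i (w : Fin n → EuclideanSpace ℝ (Fin d) × ℝ) =>
      ENNReal.ofReal (Real.exp ((inner ℝ (w i).1 v)^2/(4*Cu)))) (Measure.pi P) :=
    iIndepFun_pi (μ := P) (X := fun i (p : EuclideanSpace ℝ (Fin d) × ℝ) =>
      ENNReal.ofReal (Real.exp ((inner ℝ p.1 v)^2/(4*Cu)))) (fun i => by fun_prop)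
  have hL := lintegral_prod_eq_prod_lintegral_of_indepFun B _ hI (fun i => by fun_prop)
  have hL2 : ∫⁻ w, ∏ i ∈ B, ENNReal.ofReal (Real.exp ((inner ℝ (w i).1 v)^2/(4*Cu))) ∂(Measure.pi P)
      ≤ 2 ^ B.card := by
    rw [hL]
    refine (Finset.prod_le_prod' (g := fun _ => 2) fun i _ => ?_).trans (by simp)
    have := (measurePreserving_eval P i).lintegral_comp
      (f := fun p => ENNReal.ofReal (Real.exp ((inner ℝ p.1 v)^2/(4*Cu)))) (by fun_prop)
    exact (this.trans_le (hm i))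
  have hM := meas_ge_le_lintegral_div (μ := Measure.pi P)
    (f := fun w => ∏ i ∈ B, ENNReal.ofReal (Real.exp ((inner ℝ (w i).1 v)^2/(4*Cu))))
    (Finset.aemeasurable_fun_prod _ fun i _ => Measurable.aemeasurable (by fun_prop)) (ε := ENNReal.ofReal (Real.exp s)) (by simp [Real.exp_pos]) (by simp)
  refine (measure_mono ?_).trans (hM.trans ?_)
  · intro w hw
    simp only [Set.mem_ofPred_eq] at hw ⊢
    rw [← ENNReal.ofReal_prod_of_nonneg (fun i _ => by positivity), ← Real.exp_sum]
    apply ENNReal.ofReal_le_ofReal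
    apply Real.exp_le_exp.2
    rw [← Finset.sum_div, le_div_iff₀ (by positivity)]
    linarith
  · rw [ENNReal.ofReal_mul (by positivity), Real.exp_neg, ENNReal.ofReal_inv_of_pos (Real.exp_pos _), div_eq_mul_inv]
    gcongr
    refine hL2.trans ?_
    rw [ENNReal.ofReal_pow (by norm_num)]; simp

/-- Combinatorial sum. -/
theorem sum_subsets (n : ℕ) :
    ∑ B : Finset (Fin n), Real.exp (-(3 * Real.sqrt (n * B.card))) ≤ 3 := by
  rcases Nat.eq_zero_or_pos n with h0 | hn
  · subst h0
    simp
  have hn' : (0:ℝ) < n := by exact_mod_cast hn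
  have h := Finset.sum_powerset_apply_card (fun m => Real.exp (-(3 * Real.sqrt (n * m)))) (x := (Finset.univ : Finset (Fin n)))
  rw [Finset.powerset_univ] at h
  rw [h, Finset.card_univ, Fintype.card_fin, Finset.sum_range_succ']
  have hterm : ∀ m ∈ Finset.range n, (n.choose (m+1)) • Real.exp (-(3 * Real.sqrt (n * ((m+1:ℕ):ℝ)))) ≤ Real.exp (-Real.sqrt n) := by
    intro m hm
    have hmn : m + 1 ≤ n := by simpa using hm
    have hmn' : ((m+1:ℕ):ℝ) ≤ n := by exact_mod_cast hmn
    have hc := subset_count (Finset.univ : Finset (Fin n)) (m+1) n (by omega) hmn' (by simp)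
    have hm0 : (0:ℝ) < ((m+1:ℕ):ℝ) := by positivity
    set k : ℝ := ((m+1:ℕ):ℝ) with hk
    have hch : (n.choose (m+1) : ℝ) ≤ Real.exp (k * (1 + Real.log (n/k))) := by
      refine le_trans ?_ hc
      have : n.choose (m+1) = (Finset.powersetCard (m+1) (Finset.univ : Finset (Fin n))).card := by simp
      rw [this]
      norm_cast
      apply Finset.card_le_card
      intro A hA
      simp only [Finset.mem_powersetCard] at hA
      simp [hA.2]
    have hlog : k * (1 + Real.log (n/k)) ≤ 2 * Real.sqrt (n * k) := by
      have h1 : Real.log (n/k) ≤ 2 * (Real.sqrt (n/k) - 1) := by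
        have h2 := Real.log_le_sub_one_of_pos (x := Real.sqrt (n/k)) (by positivity)
        rw [Real.log_sqrt (by positivity)] at h2
        linarith
      have h3 : Real.sqrt (n * k) = k * Real.sqrt (n/k) := by
        rw [show (n:ℝ) * k = k^2 * (n/k) by field_simp, Real.sqrt_mul (by positivity), Real.sqrt_sq hm0.le]
      rw [h3]
      nlinarith
    have hs : Real.sqrt n ≤ Real.sqrt (n * k) := by
      apply Real.sqrt_le_sqrt
      have : (1:ℝ) ≤ k := by rw [hk]; push_cast; linarith [Nat.cast_nonneg (α := ℝ) m]
      nlinarith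
    rw [nsmul_eq_mul]
    calc _ ≤ Real.exp (k * (1 + Real.log (n/k))) * Real.exp (-(3 * Real.sqrt (n * k))) := by gcongr
      _ = Real.exp (k * (1 + Real.log (n/k)) + -(3 * Real.sqrt (n * k))) := by rw [Real.exp_add]
      _ ≤ _ := by apply Real.exp_le_exp.2; linarith
  have hs := Finset.sum_le_sum hterm
  simp only [Finset.sum_const, Finset.card_range, nsmul_eq_mul] at hs
  have hq := Real.quadratic_le_exp_of_nonneg (Real.sqrt_nonneg (n:ℝ))
  rw [Real.sq_sqrt hn'.le] at hq
  have : (n:ℝ) * Real.exp (-Real.sqrt n) ≤ 2 := by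
    rw [Real.exp_neg, ← div_eq_mul_inv, div_le_iff₀ (Real.exp_pos _)]
    linarith [Real.sqrt_nonneg (n:ℝ)]
  have h00 : n.choose 0 • Real.exp (-(3 * Real.sqrt (n * ((0:ℕ):ℝ)))) = 1 := by simp
  rw [h00]
  simp only [nsmul_eq_mul] at hs ⊢
  linarith

theorem gram_event {d n : ℕ} (hd : 0 < d) (P : Fin n → Measure (EuclideanSpace ℝ (Fin d) × ℝ))
    [∀ i, IsProbabilityMeasure (P i)] (Cu : ℝ) (hCu : 0 < Cu)
    (hP : ∀ i v, ∃ s : NNReal, (s:ℝ) ≤ Cu * ‖v‖^2 ∧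
      (P i).map (fun p => inner ℝ p.1 v) = gaussianReal 0 s) :
    Measure.pi P {w | ¬ GramOK (144*Cu) (fun i => (w i).1)} ≤ ENNReal.ofReal (Real.exp (-(5*d))) := by
  obtain ⟨N, hN1, hN2, hN3⟩ := exists_net d
  let s : Finset (Fin n) → ℝ := fun B => B.card + 3 * Real.sqrt (n * B.card) + 9 * d
  have hsub : {w : Fin n → EuclideanSpace ℝ (Fin d) × ℝ | ¬ GramOK (144*Cu) (fun i => (w i).1)} ⊆
      ⋃ B ∈ (Finset.univ : Finset (Finset (Fin n))), ⋃ v ∈ N, {w | 4 * Cu * s B < ∑ i ∈ B, (inner ℝ (w i).1 v)^2} := by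
    intro w hw
    by_contra hcon
    apply hw
    simp only [Set.mem_iUnion, Set.mem_ofPred_eq, not_exists, not_lt] at hcon
    intro B v
    have := net_quad hN3 B (fun i => (w i).1) (4 * Cu * s B) (fun u hu => hcon B (Finset.mem_univ _) u hu) v
    refine this.trans ?_
    apply mul_le_mul_of_nonneg_right _ (sq_nonneg _)
    have hm : (B.card:ℝ) ≤ Real.sqrt (n * B.card) := by
      apply Real.le_sqrt_of_sq_le
      have : (B.card:ℝ) ≤ n := by exact_mod_cast (by simpa using Finset.card_le_univ B)
      nlinarith [Nat.cast_nonneg (α := ℝ) B.card]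
    have hs : s B ≤ 9 * (Real.sqrt (n * B.card) + d) := by
      simp only [s]
      linarith [Real.sqrt_nonneg ((n:ℝ) * B.card)]
    nlinarith
  refine (measure_mono hsub).trans ?_
  refine (measure_biUnion_finset_le _ _).trans ?_
  have hB : ∀ B ∈ (Finset.univ : Finset (Finset (Fin n))),
      Measure.pi P (⋃ v ∈ N, {w | 4 * Cu * s B < ∑ i ∈ B, (inner ℝ (w i).1 v)^2})
      ≤ ENNReal.ofReal (Real.exp (-(7*d)) * Real.exp (-(3 * Real.sqrt (n * B.card)))) := by
    intro B _
    refine (measure_biUnion_finset_le _ _).trans ?_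
    refine (Finset.sum_le_sum fun v hv => chi_tail P Cu hCu hP B v (hN2 v hv) (s B)).trans ?_
    rw [Finset.sum_const, nsmul_eq_mul, ← ENNReal.ofReal_natCast, ← ENNReal.ofReal_mul (by positivity)]
    apply ENNReal.ofReal_le_ofReal
    have h5 : (N.card:ℝ) ≤ Real.exp (2 * d) := by
      calc (N.card:ℝ) ≤ (5:ℝ)^d := by exact_mod_cast hN1
        _ ≤ (Real.exp 2)^d := by
          gcongr
          have := Real.quadratic_le_exp_of_nonneg (x := 2) (by norm_num)
          linarith
        _ = _ := by rw [← Real.exp_nat_mul]; ring_nf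
    have h2 : (2:ℝ)^B.card ≤ Real.exp B.card := by
      calc (2:ℝ)^B.card ≤ (Real.exp 1)^B.card := by
            gcongr
            linarith [Real.add_one_le_exp (1:ℝ)]
        _ = _ := by rw [← Real.exp_nat_mul]; ring_nf
    calc (N.card:ℝ) * (2^B.card * Real.exp (-s B)) ≤ Real.exp (2*d) * (Real.exp B.card * Real.exp (-s B)) := by gcongr
      _ = _ := by
        rw [← Real.exp_add, ← Real.exp_add, ← Real.exp_add]
        congr 1
        simp only [s]; ring
  refine (Finset.sum_le_sum hB).trans ?_
  rw [← ENNReal.ofReal_sum_of_nonneg (fun _ _ => by positivity)]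
  apply ENNReal.ofReal_le_ofReal
  rw [← Finset.mul_sum]
  have h3 := sum_subsets n
  have hd' : (1:ℝ) ≤ d := by exact_mod_cast hd
  have h4 : (3:ℝ) ≤ Real.exp (2*d) := by
    linarith [Real.add_one_le_exp (2*(d:ℝ))]
  calc _ ≤ Real.exp (-(7*d)) * Real.exp (2*d) := by gcongr; linarith
    _ = _ := by rw [← Real.exp_add]; ring_nf

theorem qloss_eq (τ u : ℝ) : qloss τ u = τ * u + max (-u) 0 := by
  unfold qloss
  split_ifs with h
  · rw [max_eq_right (by linarith)]; ring
  · rw [max_eq_left (by linarith)]; ring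

theorem relu_intble (u c : ℝ) :
    IntervalIntegrable (fun s : ℝ => if 0 < u + s * c then c else 0) volume 0 1 := by
  rw [intervalIntegrable_iff]
  refine Measure.integrableOn_of_bounded (M := |c|) (by simp) ?_ ?_
  · apply Measurable.aestronglyMeasurable
    exact Measurable.ite (measurableSet_lt measurable_const (by fun_prop)) measurable_const measurable_const
  · refine Filter.Eventually.of_forall fun s => ?_
    split_ifs <;> simp

theorem relu_int (u c : ℝ) :
    ∫ s in (0:ℝ)..1, (if 0 < u + s * c then c else 0) = max (u + c) 0 - max u 0 := by
  by_cases hc : c = 0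
  · subst hc; simp
  have := integral_eq_of_hasDerivAt_off_countable_of_le (fun s : ℝ => max (u + s * c) 0)
    (fun s : ℝ => if 0 < u + s * c then c else 0) (a := 0) (b := 1) zero_le_one
    (s := {-u/c}) (Set.countable_singleton _) (by fun_prop) ?_ (relu_intble u c)
  · simpa using this
  · rintro s ⟨_, hs⟩
    have hne : u + s * c ≠ 0 := by
      intro h
      apply hs
      rw [Set.mem_singleton_iff, eq_div_iff hc]
      linarith
    have hder : HasDerivAt (fun s : ℝ => u + s * c) c s := by
      simpa using ((hasDerivAt_id s).mul_const c).const_add u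
    have hcont : Continuous (fun s : ℝ => u + s * c) := by fun_prop
    rcases lt_or_gt_of_ne hne with h | h
    · simp only [not_lt.2 h.le, if_false]
      apply (hasDerivAt_const s (0:ℝ)).congr_of_eventuallyEq
      filter_upwards [(hcont.tendsto s).eventually (gt_mem_nhds h)] with r hr
      exact max_eq_right hr.le
    · simp only [h, if_true]
      apply hder.congr_of_eventuallyEq
      filter_upwards [(hcont.tendsto s).eventually (lt_mem_nhds h)] with r hr
      exact max_eq_left hr.le

theorem grad_bound {d n : ℕ} (τ : ℝ) (hτ : τ ∈ Set.Ioo (0:ℝ) 1)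
    (x : Fin n → EuclideanSpace ℝ (Fin d)) (y : Fin n → ℝ) (e : Fin n → Bool) (R : ℝ)
    (h1 : ∀ b, ‖Tsum x e (Aset x y b)‖ ≤ R) (h2 : ‖Tsum x e Finset.univ‖ ≤ R)
    (β1 β2 : EuclideanSpace ℝ (Fin d)) :
    |∑ i, sg (e i) * (qloss τ (y i - inner ℝ (x i) β1) - qloss τ (y i - inner ℝ (x i) β2))|
      ≤ 3 * max τ (1-τ) * R * ‖β1 - β2‖ := by
  set v := β1 - β2 with hv
  have hx : ∀ i, inner ℝ (x i) β1 = inner ℝ (x i) β2 + (inner ℝ (x i) v : ℝ) := by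
    intro i; rw [hv, inner_sub_right]; ring
  have hterm : ∀ i, sg (e i) * (qloss τ (y i - inner ℝ (x i) β1) - qloss τ (y i - inner ℝ (x i) β2))
      = -τ * (sg (e i) * inner ℝ (x i) v) + ∫ s in (0:ℝ)..1, sg (e i) *
        (if 0 < (inner ℝ (x i) β2 - y i) + s * inner ℝ (x i) v then (inner ℝ (x i) v : ℝ) else 0) := by
    intro i
    rw [intervalIntegral.integral_const_mul, relu_int, qloss_eq, qloss_eq, hx i]
    have e1 : -(y i - (inner ℝ (x i) β2 + (inner ℝ (x i) v : ℝ))) = inner ℝ (x i) β2 - y i + inner ℝ (x i) v := by ring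
    have e2 : -(y i - (inner ℝ (x i) β2 : ℝ)) = inner ℝ (x i) β2 - y i := by ring
    rw [e1, e2]; ring
  rw [Finset.sum_congr rfl fun i _ => hterm i, Finset.sum_add_distrib, ← Finset.mul_sum,
    ← intervalIntegral.integral_finsetSum (fun i _ => (relu_intble _ _).const_mul _)]
  have hT : ∀ A : Finset (Fin n), inner ℝ (Tsum x e A) v = ∑ i ∈ A, sg (e i) * inner ℝ (x i) v := by
    intro A
    rw [Tsum, sum_inner]
    exact Finset.sum_congr rfl fun i _ => real_inner_smul_left _ _ _
  have hA : |∑ i, sg (e i) * inner ℝ (x i) v| ≤ R * ‖v‖ := by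
    rw [← hT]
    exact (abs_real_inner_le_norm _ _).trans (by gcongr)
  have hB : |∫ s in (0:ℝ)..1, ∑ i, sg (e i) *
        (if 0 < (inner ℝ (x i) β2 - y i) + s * inner ℝ (x i) v then (inner ℝ (x i) v : ℝ) else 0)| ≤ R * ‖v‖ := by
    have := intervalIntegral.norm_integral_le_of_norm_le_const (a := 0) (b := 1) (C := R * ‖v‖)
      (f := fun s => ∑ i, sg (e i) *
        (if 0 < (inner ℝ (x i) β2 - y i) + s * inner ℝ (x i) v then (inner ℝ (x i) v : ℝ) else 0)) ?_
    · simpa using this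
    · intro s _
      have : ∑ i, sg (e i) *
        (if 0 < (inner ℝ (x i) β2 - y i) + s * inner ℝ (x i) v then (inner ℝ (x i) v : ℝ) else 0)
        = inner ℝ (Tsum x e (Aset x y (β2 + s • v))) v := by
        rw [hT, Aset, Finset.sum_filter]
        refine Finset.sum_congr rfl fun i _ => ?_
        have : (0 < (inner ℝ (x i) β2 - y i) + s * inner ℝ (x i) v) ↔ y i < inner ℝ (x i) (β2 + s • v) := by
          rw [inner_add_right, real_inner_smul_right]
          constructor <;> intro h <;> linarith
        simp only [this]
        split_ifs <;> simp
      rw [this]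
      exact (abs_real_inner_le_norm _ _).trans (by gcongr; exact h1 _)
  have hM1 : τ ≤ max τ (1-τ) := le_max_left _ _
  have hM2 : 1 - τ ≤ max τ (1-τ) := le_max_right _ _
  have hR : 0 ≤ R * ‖v‖ := (abs_nonneg _).trans hA
  have h0 := hτ.1
  calc _ ≤ |-τ * ∑ i, sg (e i) * inner ℝ (x i) v| + _ := abs_add_le _ _
    _ ≤ τ * (R * ‖v‖) + R * ‖v‖ := by
        rw [abs_mul, abs_neg, abs_of_pos hτ.1]
        gcongr
    _ ≤ _ := by nlinarith

theorem qloss_lip (τ : ℝ) (hτ : τ ∈ Set.Ioo (0:ℝ) 1) (a b : ℝ) :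
    |qloss τ a - qloss τ b| ≤ max τ (1-τ) * |a - b| := by
  have h0 := hτ.1
  have h1 := hτ.2
  have hM1 : τ ≤ max τ (1-τ) := le_max_left _ _
  have hM2 : 1 - τ ≤ max τ (1-τ) := le_max_right _ _
  set M := max τ (1-τ)
  have key : ∀ a b : ℝ, b ≤ a → |qloss τ a - qloss τ b| ≤ M * |a - b| := by
    intro a b hab
    rw [abs_of_nonneg (sub_nonneg.2 hab), abs_le]
    unfold qloss
    split_ifs <;> constructor <;> nlinarith
  rcases le_total a b with h | h
  · rw [abs_sub_comm, abs_sub_comm a]; exact key _ _ h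
  · exact key _ _ h

theorem qloss_cont (τ : ℝ) : Continuous (qloss τ) := by
  have : qloss τ = fun u => τ * u + max (-u) 0 := funext (qloss_eq τ)
  rw [this]; fun_prop

/-- Coordinatewise swap. -/
def swp {Z : Type*} {n : ℕ} (e : Fin n → Bool) (p : (Fin n → Z) × (Fin n → Z)) :
    (Fin n → Z) × (Fin n → Z) :=
  (fun i => if e i then p.1 i else p.2 i, fun i => if e i then p.2 i else p.1 i)

theorem swp_meas {Z : Type*} [MeasurableSpace Z] {n : ℕ} (e : Fin n → Bool) :
    Measurable (swp (Z := Z) e) := by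
  unfold swp
  refine Measurable.prodMk (measurable_pi_lambda _ fun i => ?_) (measurable_pi_lambda _ fun i => ?_)
  · cases e i <;> simp <;> fun_prop
  · cases e i <;> simp <;> fun_prop

theorem swp_map {Z : Type*} [MeasurableSpace Z] {n : ℕ} (P : Fin n → Measure Z)
    [∀ i, IsProbabilityMeasure (P i)] (e : Fin n → Bool) :
    ((Measure.pi P).prod (Measure.pi P)).map (swp e) = (Measure.pi P).prod (Measure.pi P) := by
  symm
  let C : Set (Set (Fin n → Z)) := Set.pi Set.univ '' Set.pi Set.univ (fun _ => {s | MeasurableSet s})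
  have hsp : (Measure.pi P).FiniteSpanningSetsIn C :=
    { set := fun _ => Set.univ
      set_mem := fun _ => ⟨fun _ => Set.univ, by simp, by simp⟩
      finite := fun _ => by simp
      spanning := Set.iUnion_const _ }
  refine Measure.prod_eq_generateFrom (C := C) (D := C) generateFrom_pi generateFrom_pi
    isPiSystem_pi isPiSystem_pi hsp hsp ?_
  rintro _ ⟨s, hs, rfl⟩ _ ⟨t, ht, rfl⟩
  have hs' : ∀ i, MeasurableSet (s i) := fun i => hs i trivial
  have ht' : ∀ i, MeasurableSet (t i) := fun i => ht i trivial
  rw [Measure.map_apply (swp_meas e) ((MeasurableSet.univ_pi hs').prod (MeasurableSet.univ_pi ht'))]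
  have hpre : swp e ⁻¹' (Set.pi Set.univ s ×ˢ Set.pi Set.univ t) =
      (Set.pi Set.univ fun i => if e i then s i else t i) ×ˢ
        (Set.pi Set.univ fun i => if e i then t i else s i) := by
    ext p
    simp only [swp, Set.mem_preimage, Set.mem_prod, Set.mem_pi, Set.mem_univ, true_imp_iff]
    rw [← forall_and, ← forall_and]
    refine forall_congr' fun i => ?_
    cases e i <;> simp [and_comm]
  rw [hpre, Measure.prod_prod, Measure.pi_pi, Measure.pi_pi, Measure.pi_pi, Measure.pi_pi,
    ← Finset.prod_mul_distrib, ← Finset.prod_mul_distrib]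
  refine Finset.prod_congr rfl fun i _ => ?_
  cases e i <;> simp [mul_comm]

open Classical in
theorem symmetrize {Z Θ : Type*} [TopologicalSpace Z] [SecondCountableTopology Z]
    [MeasurableSpace Z] [BorelSpace Z] {n : ℕ} (P : Fin n → Measure Z)
    [∀ i, IsProbabilityMeasure (P i)] (f : Θ → Z → ℝ) (hf : ∀ θ, Continuous (f θ))
    (r I : Θ → ℝ)
    (hcheb : ∀ θ, (1/2 : ENNReal) ≤ Measure.pi P {w | |(∑ i, f θ (w i)) - I θ| ≤ 2 * r θ})
    (N : Set (Fin n → Z)) (κ : ENNReal)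
    (hN : ∀ w, w ∉ N → ((Finset.univ.filter fun e : Fin n → Bool =>
      ∃ θ, r θ < |∑ i, sg (e i) * f θ (w i)|).card : ENNReal) ≤ 2^n * κ) :
    Measure.pi P {w | ∃ θ, 4 * r θ < |(∑ i, f θ (w i)) - I θ|}
      ≤ 4 * (Measure.pi P N + κ) := by
  set ν := Measure.pi P with hν
  let B : Set ((Fin n → Z) × (Fin n → Z)) :=
    {p | ∃ θ, 2 * r θ < |∑ i, (f θ (p.1 i) - f θ (p.2 i))|}
  have hBo : IsOpen B := by
    have : B = ⋃ θ, {p | 2 * r θ < |∑ i, (f θ (p.1 i) - f θ (p.2 i))|} := by ext; simp [B]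
    rw [this]
    refine isOpen_iUnion fun θ => ?_
    have := hf θ
    exact isOpen_lt (by fun_prop) (by fun_prop)
  let Be : (Fin n → Bool) → Set (Fin n → Z) := fun e => {w | ∃ θ, r θ < |∑ i, sg (e i) * f θ (w i)|}
  have hBe : ∀ e, MeasurableSet (Be e) := by
    intro e
    have : Be e = ⋃ θ, {w | r θ < |∑ i, sg (e i) * f θ (w i)|} := by ext; simp [Be]
    rw [this]
    refine IsOpen.measurableSet (isOpen_iUnion fun θ => ?_)
    have := hf θ
    exact isOpen_lt (by fun_prop) (by fun_prop)
  have step1 : (1/2 : ENNReal) * ν {w | ∃ θ, 4 * r θ < |(∑ i, f θ (w i)) - I θ|} ≤ (ν.prod ν) B := by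
    rw [Measure.prod_apply hBo.measurableSet]
    refine le_trans ?_ (setLIntegral_le_lintegral {w | ∃ θ, 4 * r θ < |(∑ i, f θ (w i)) - I θ|} _)
    rw [← setLIntegral_const]
    refine setLIntegral_mono (measurable_measure_prodMk_left hBo.measurableSet) ?_
    rintro w ⟨θ, hθ⟩
    refine (hcheb θ).trans (measure_mono ?_)
    intro w' hw'
    refine ⟨θ, ?_⟩
    simp only [Set.mem_ofPred_eq] at hw'
    rw [Finset.sum_sub_distrib]
    have h3 := abs_sub_le (∑ i, f θ (w i)) (∑ i, f θ (w' i)) (I θ)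
    linarith
  have step2 : ∀ e, (ν.prod ν) B ≤ 2 * ν (Be e) := by
    intro e
    conv_lhs => rw [hν, ← swp_map P e, ← hν, Measure.map_apply (swp_meas e) hBo.measurableSet]
    have hsub : swp e ⁻¹' B ⊆ (Be e ×ˢ Set.univ) ∪ (Set.univ ×ˢ Be e) := by
      rintro p ⟨θ, hθ⟩
      have heq : ∑ i, (f θ ((swp e p).1 i) - f θ ((swp e p).2 i)) =
          ∑ i, sg (e i) * f θ (p.1 i) - ∑ i, sg (e i) * f θ (p.2 i) := by
        rw [← Finset.sum_sub_distrib]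
        refine Finset.sum_congr rfl fun i _ => ?_
        cases h : e i <;> simp [swp, sg, h]
        ring
      rw [heq] at hθ
      by_contra hc
      simp only [Set.mem_union, Set.mem_prod, Set.mem_univ, and_true, true_and, not_or] at hc
      have h1 : |∑ i, sg (e i) * f θ (p.1 i)| ≤ r θ := by
        by_contra h; exact hc.1 ⟨θ, not_le.1 h⟩
      have h2 : |∑ i, sg (e i) * f θ (p.2 i)| ≤ r θ := by
        by_contra h; exact hc.2 ⟨θ, not_le.1 h⟩
      have h3 := abs_sub (∑ i, sg (e i) * f θ (p.1 i)) (∑ i, sg (e i) * f θ (p.2 i))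
      linarith
    refine (measure_mono hsub).trans ((measure_union_le _ _).trans ?_)
    rw [Measure.prod_prod, Measure.prod_prod]
    simp [two_mul]
  have step3 : ∑ e, ν (Be e) ≤ 2^n * (ν N + κ) := by
    set N' := toMeasurable ν N with hN'
    have hN'm : MeasurableSet N' := measurableSet_toMeasurable _ _
    have h1 : ∀ e, ν (Be e) ≤ ν N + ν (Be e \ N') := by
      intro e
      rw [← measure_toMeasurable N, ← hN']
      refine (measure_mono ?_).trans (measure_union_le _ _)
      intro w hw
      by_cases h : w ∈ N'
      · exact Or.inl h
      · exact Or.inr ⟨hw, h⟩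
    have h2 : ∑ e, ν (Be e \ N') ≤ 2^n * κ := by
      have : ∀ e, ν (Be e \ N') = ∫⁻ w, (Be e \ N').indicator 1 w ∂ν := fun e =>
        (lintegral_indicator_one ((hBe e).diff hN'm)).symm
      simp_rw [this]
      rw [← lintegral_finsetSum _ (fun e _ => measurable_one.indicator ((hBe e).diff hN'm))]
      calc _ ≤ ∫⁻ w, 2^n * κ ∂ν := by
            refine lintegral_mono fun w => ?_
            by_cases hw : w ∈ N'
            · rw [Finset.sum_eq_zero]
              · simp
              · intro e _
                apply Set.indicator_of_notMem
                simp [hw]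
            · refine le_trans (le_of_eq ?_) (hN w (fun h => hw (subset_toMeasurable _ _ h)))
              rw [Finset.card_filter]
              push_cast
              refine Finset.sum_congr rfl fun e _ => ?_
              simp only [Set.indicator_apply, Set.mem_sdiff, hw, not_false_eq_true, and_true, Pi.one_apply, Be, Set.mem_ofPred_eq]
        _ = _ := by simp
    calc _ ≤ ∑ e, (ν N + ν (Be e \ N')) := Finset.sum_le_sum fun e _ => h1 e
      _ = 2^n * ν N + ∑ e, ν (Be e \ N') := by
        rw [Finset.sum_add_distrib]; simp
      _ ≤ _ := by rw [mul_add]; gcongr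
  have step4 : (ν.prod ν) B ≤ 2 * (ν N + κ) := by
    have h : (2^n : ENNReal) * (ν.prod ν) B ≤ 2^n * (2 * (ν N + κ)) := by
      calc (2^n : ENNReal) * (ν.prod ν) B = ∑ e : Fin n → Bool, (ν.prod ν) B := by simp
        _ ≤ ∑ e, 2 * ν (Be e) := Finset.sum_le_sum fun e _ => step2 e
        _ = 2 * ∑ e, ν (Be e) := by rw [Finset.mul_sum]
        _ ≤ 2 * (2^n * (ν N + κ)) := by gcongr
        _ = _ := by ring
    exact (ENNReal.mul_le_mul_iff_right (by simp) (by simp)).1 h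
  have h5 := step1.trans step4
  calc _ = 2 * ((1/2 : ENNReal) * ν {w | ∃ θ, 4 * r θ < |(∑ i, f θ (w i)) - I θ|}) := by
        rw [← mul_assoc, one_div, ENNReal.mul_inv_cancel (by simp) (by simp), one_mul]
    _ ≤ 2 * (2 * (ν N + κ)) := by gcongr
    _ = _ := by ring

/-- Loss difference. -/
def ldiff {d : ℕ} (τ : ℝ) (θ : EuclideanSpace ℝ (Fin d) × EuclideanSpace ℝ (Fin d))
    (p : EuclideanSpace ℝ (Fin d) × ℝ) : ℝ :=
  qloss τ (p.2 - inner ℝ p.1 θ.1) - qloss τ (p.2 - inner ℝ p.1 θ.2)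

theorem ldiff_cont {d : ℕ} (τ : ℝ) (θ : EuclideanSpace ℝ (Fin d) × EuclideanSpace ℝ (Fin d)) :
    Continuous (ldiff τ θ) := by
  have := qloss_cont τ
  unfold ldiff
  fun_prop

theorem ldiff_le {d : ℕ} (τ : ℝ) (hτ : τ ∈ Set.Ioo (0:ℝ) 1)
    (θ : EuclideanSpace ℝ (Fin d) × EuclideanSpace ℝ (Fin d)) (p : EuclideanSpace ℝ (Fin d) × ℝ) :
    |ldiff τ θ p| ≤ max τ (1-τ) * |inner ℝ p.1 (θ.1 - θ.2)| := by
  refine (qloss_lip τ hτ _ _).trans (le_of_eq ?_)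
  rw [inner_sub_right, ← abs_neg]
  congr 2; ring

theorem ldiff_var {d : ℕ} (τ : ℝ) (hτ : τ ∈ Set.Ioo (0:ℝ) 1)
    (P : Measure (EuclideanSpace ℝ (Fin d) × ℝ)) [IsProbabilityMeasure P] (Cu : ℝ)
    (hP : ∀ v, ∃ s : NNReal, (s:ℝ) ≤ Cu * ‖v‖^2 ∧
      P.map (fun p => inner ℝ p.1 v) = gaussianReal 0 s)
    (θ : EuclideanSpace ℝ (Fin d) × EuclideanSpace ℝ (Fin d)) :
    MemLp (ldiff τ θ) 2 P ∧ Var[ldiff τ θ; P] ≤ (max τ (1-τ))^2 * (Cu * ‖θ.1 - θ.2‖^2) := by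
  obtain ⟨s, hs1, hs2⟩ := hP (θ.1 - θ.2)
  have hmeas : Measurable fun p : EuclideanSpace ℝ (Fin d) × ℝ => (inner ℝ p.1 (θ.1 - θ.2) : ℝ) := by fun_prop
  have hG : MemLp (fun p : EuclideanSpace ℝ (Fin d) × ℝ => (inner ℝ p.1 (θ.1 - θ.2) : ℝ)) 2 P := by
    have h := memLp_id_gaussianReal' (μ := 0) (v := s) 2 (by simp)
    rw [← hs2] at h
    exact (memLp_map_measure_iff (by fun_prop) hmeas.aemeasurable).1 h
  have hL : MemLp (ldiff τ θ) 2 P :=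
    hG.of_le_mul (ldiff_cont τ θ).aestronglyMeasurable
      (Filter.Eventually.of_forall fun p => by simpa using ldiff_le τ hτ θ p)
  refine ⟨hL, ?_⟩
  have h2 : ∫ p, (inner ℝ p.1 (θ.1 - θ.2) : ℝ)^2 ∂P = s := by
    have h := variance_of_integral_eq_zero (μ := gaussianReal 0 s) (X := id) (by fun_prop) (by simp)
    rw [variance_id_gaussianReal] at h
    rw [h, ← hs2, integral_map hmeas.aemeasurable (by fun_prop)]
    rfl
  refine (variance_le_expectation_sq hL.1).trans ?_
  calc ∫ p, (ldiff τ θ ^ 2) p ∂P ≤ ∫ p, (max τ (1-τ))^2 * (inner ℝ p.1 (θ.1 - θ.2) : ℝ)^2 ∂P := by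
        refine integral_mono hL.integrable_sq (hG.integrable_sq.const_mul _) fun p => ?_
        simp only [Pi.pow_apply]
        rw [← sq_abs, ← sq_abs (inner ℝ _ _), ← mul_pow]
        have := ldiff_le τ hτ θ p
        gcongr
    _ = (max τ (1-τ))^2 * s := by rw [integral_const_mul, h2]
    _ ≤ _ := by gcongr

theorem main_pi {d n : ℕ} (hd : 0 < d) (hn : 0 < n) (τ : ℝ) (hτ : τ ∈ Set.Ioo (0:ℝ) 1)
    (P : Fin n → Measure (EuclideanSpace ℝ (Fin d) × ℝ))
    [∀ i, IsProbabilityMeasure (P i)] (Cu : ℝ) (hCu : 0 < Cu)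
    (hP : ∀ i v, ∃ s : NNReal, (s:ℝ) ≤ Cu * ‖v‖^2 ∧
      (P i).map (fun p => inner ℝ p.1 v) = gaussianReal 0 s) :
    Measure.pi P {w | ∃ θ : EuclideanSpace ℝ (Fin d) × EuclideanSpace ℝ (Fin d),
      4 * (3 * max τ (1-τ) * (182 * Real.sqrt (144 * Cu * n * d)) * ‖θ.1 - θ.2‖) <
        |(∑ i, ldiff τ θ (w i)) - ∫ w', ∑ i, ldiff τ θ (w' i) ∂(Measure.pi P)|}
      ≤ ENNReal.ofReal (Real.exp (-d)) := by
  classical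
  have hd' : (1:ℝ) ≤ d := by exact_mod_cast hd
  have hn' : (0:ℝ) < n := by exact_mod_cast hn
  have hM : 0 < max τ (1-τ) := lt_max_of_lt_left hτ.1
  have hS := symmetrize P (ldiff τ) (ldiff_cont τ)
    (fun θ => 3 * max τ (1-τ) * (182 * Real.sqrt (144 * Cu * n * d)) * ‖θ.1 - θ.2‖)
    (fun θ => ∫ w', ∑ i, ldiff τ θ (w' i) ∂(Measure.pi P)) ?_
    {w | ¬ GramOK (144*Cu) (fun i => (w i).1)} (ENNReal.ofReal (2 * Real.exp (-(5*d)))) ?_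
  · refine hS.trans ?_
    have hg := gram_event hd P Cu hCu hP
    calc _ ≤ 4 * (ENNReal.ofReal (Real.exp (-(5*d))) + ENNReal.ofReal (2 * Real.exp (-(5*d)))) := by gcongr
      _ = ENNReal.ofReal (12 * Real.exp (-(5*d))) := by
        rw [← ENNReal.ofReal_add (by positivity) (by positivity),
          show (4:ENNReal) = ENNReal.ofReal 4 by simp, ← ENNReal.ofReal_mul (by norm_num)]
        ring_nf
      _ ≤ _ := by
        apply ENNReal.ofReal_le_ofReal
        have h12 : (12:ℝ) ≤ Real.exp (4 * d) := by
          have := Real.quadratic_le_exp_of_nonneg (x := 4 * (d:ℝ)) (by positivity)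
          nlinarith
        calc 12 * Real.exp (-(5*d)) ≤ Real.exp (4*d) * Real.exp (-(5*d)) := by gcongr
          _ = _ := by rw [← Real.exp_add]; ring_nf
  · intro θ
    set v := θ.1 - θ.2 with hv
    set M := max τ (1-τ) with hMdef
    set K := 3 * M * (182 * Real.sqrt (144 * Cu * n * d)) with hK
    have hKpos : 0 < K := by positivity
    by_cases hv0 : v = 0
    · have h0 : ∀ p, ldiff τ θ p = 0 := by
        intro p
        have := ldiff_le τ hτ θ p
        rw [← hv, hv0] at this
        simpa using this
      simp [h0, hv0]
    have hvpos : 0 < ‖v‖ := norm_pos_iff.2 hv0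
    have hvar := fun i => ldiff_var τ hτ (P i) Cu (hP i) θ
    have hVs := variance_sum_pi (μ := P) (X := fun _ => ldiff τ θ) (fun i => (hvar i).1)
    have hmem : MemLp (∑ i, fun w : Fin n → EuclideanSpace ℝ (Fin d) × ℝ => ldiff τ θ (w i)) 2 (Measure.pi P) :=
      memLp_finsetSum' _ fun i _ => (hvar i).1.comp_measurePreserving (measurePreserving_eval P i)
    have hch := meas_ge_le_variance_div_sq hmem (c := 2 * (K * ‖v‖)) (by positivity)
    have hVle : Var[∑ i, fun w : Fin n → EuclideanSpace ℝ (Fin d) × ℝ => ldiff τ θ (w i); Measure.pi P]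
        / (2 * (K * ‖v‖))^2 ≤ 1/2 := by
      rw [hVs]
      have h1 : ∑ i, Var[ldiff τ θ; P i] ≤ n * (M^2 * (Cu * ‖v‖^2)) := by
        refine (Finset.sum_le_sum fun i _ => (hvar i).2).trans (by simp [hMdef, hv])
      rw [div_le_iff₀ (by positivity)]
      refine h1.trans ?_
      have h2 : K^2 = (546)^2 * M^2 * (144 * Cu * n * d) := by
        rw [hK, mul_pow, mul_pow, mul_pow, Real.sq_sqrt (by positivity)]; ring
      have h3 : 0 ≤ M^2 * Cu * n * ‖v‖^2 := by positivity
      have h4 : 1 / 2 * (2 * (K * ‖v‖))^2 = 2 * 546^2 * 144 * d * (M^2 * Cu * n * ‖v‖^2) := by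
        rw [mul_pow, mul_pow, h2]; ring
      rw [h4]
      nlinarith
    have hc2 := hch.trans (ENNReal.ofReal_le_ofReal hVle)
    have hsum : ∀ w : Fin n → EuclideanSpace ℝ (Fin d) × ℝ,
        (∑ i, fun w : Fin n → EuclideanSpace ℝ (Fin d) × ℝ => ldiff τ θ (w i)) w = ∑ i, ldiff τ θ (w i) := by
      intro w; simp
    simp only [hsum] at hc2
    have hsub : {w : Fin n → EuclideanSpace ℝ (Fin d) × ℝ |
        2 * (K * ‖v‖) ≤ |∑ i, ldiff τ θ (w i) - ∫ w', ∑ i, ldiff τ θ (w' i) ∂(Measure.pi P)|}ᶜ ⊆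
        {w | |∑ i, ldiff τ θ (w i) - ∫ w', ∑ i, ldiff τ θ (w' i) ∂(Measure.pi P)| ≤ 2 * (K * ‖v‖)} := by
      intro w hw
      simp only [Set.mem_compl_iff, Set.mem_ofPred_eq, not_le] at hw ⊢
      exact hw.le
    refine le_trans ?_ (measure_mono hsub)
    have hle := measure_univ_le_add_compl (μ := Measure.pi P) {w : Fin n → EuclideanSpace ℝ (Fin d) × ℝ |
        2 * (K * ‖v‖) ≤ |∑ i, ldiff τ θ (w i) - ∫ w', ∑ i, ldiff τ θ (w' i) ∂(Measure.pi P)|}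
    rw [measure_univ] at hle
    have hhalf : ENNReal.ofReal (1/2) = 1/2 := by
      rw [ENNReal.ofReal_div_of_pos (by norm_num)]; simp
    rw [hhalf] at hc2
    have h5 := hle.trans (add_le_add_left hc2 _)
    rw [← ENNReal.add_le_add_iff_left (a := (1/2 : ENNReal)) (by simp), ENNReal.add_halves]
    exact h5
  · intro w hw
    simp only [Set.mem_ofPred_eq, not_not] at hw
    have hcm := cond_main hd hn (144*Cu) (by positivity) (fun i => (w i).1) (fun i => (w i).2) hw
    rw [show (2^n : ENNReal) * ENNReal.ofReal (2 * Real.exp (-(5*d)))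
      = ENNReal.ofReal (2^n * (2 * Real.exp (-(5*d)))) by
        rw [ENNReal.ofReal_mul (p := 2^n) (by positivity), ENNReal.ofReal_pow (by norm_num)]; simp]
    rw [← ENNReal.ofReal_natCast]
    apply ENNReal.ofReal_le_ofReal
    refine le_trans ?_ hcm
    norm_cast
    apply Finset.card_le_card
    intro e he
    simp only [Finset.mem_filter, Finset.mem_univ, true_and] at he ⊢
    obtain ⟨θ, hθ⟩ := he
    by_contra hc
    push Not at hc
    exact absurd (grad_bound τ hτ (fun i => (w i).1) (fun i => (w i).2) e _ hc.1 hc.2 θ.1 θ.2) (not_le.2 hθ)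

/-- **Uniform concentration of the empirical quantile loss** (Proposition 3 style):
there are universal constants `C₁, C₂ > 0` such that for any model with Gaussian
covariates satisfying Assumption 1 and independent observations, with probability at least
`1 − exp(−C₁ d) − exp(−√(n/log n))`, simultaneously for all `β₁, β₂`,
`|f(β₁) − f(β₂) − E[f(β₁) − f(β₂)]| ≤ C₂ max{τ,1−τ} √(C_u d/n) ‖β₁ − β₂‖`, where
`f(β) = (1/n) ∑_i ρ_{Q,τ}(Y_i − ⟨X_i, β⟩)`. -/
theorem stmt_13 :
    ∃ C1 C2 : ℝ, 0 < C1 ∧ 0 < C2 ∧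
    ∀ (d n : ℕ), 0 < d → 0 < n →
    ∀ (Ω : Type) (_ : MeasurableSpace Ω) (μ : Measure Ω), IsProbabilityMeasure μ →
    ∀ (τ Cl Cu : ℝ), τ ∈ Set.Ioo (0 : ℝ) 1 → 0 < Cl → 0 < Cu →
    ∀ (S : Matrix (Fin d) (Fin d) ℝ), S.IsSymm → S.PosDef →
    (∀ v : EuclideanSpace ℝ (Fin d),
      Cl * ‖v‖ ^ 2 ≤ quadForm S v ∧ quadForm S v ≤ Cu * ‖v‖ ^ 2) →
    ∀ (X : Fin n → Ω → EuclideanSpace ℝ (Fin d)) (Y : Fin n → Ω → ℝ),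
    (∀ i, Measurable (X i)) → (∀ i, Measurable (Y i)) →
    (∀ i (v : EuclideanSpace ℝ (Fin d)),
      Measure.map (fun ω => (inner ℝ v (X i ω) : ℝ)) μ
        = gaussianReal 0 (Real.toNNReal (quadForm S v))) →
    iIndepFun (fun i ω => (X i ω, Y i ω)) μ →
    ENNReal.ofReal (1 - Real.exp (-(C1 * d))
        - Real.exp (-Real.sqrt ((n : ℝ) / Real.log n))) ≤
      μ {ω | ∀ β1 β2 : EuclideanSpace ℝ (Fin d),
        |((n : ℝ)⁻¹ * ∑ i : Fin n, qloss τ (Y i ω - (inner ℝ (X i ω) β1 : ℝ)))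
          - ((n : ℝ)⁻¹ * ∑ i : Fin n, qloss τ (Y i ω - (inner ℝ (X i ω) β2 : ℝ)))
          - ∫ ω', (((n : ℝ)⁻¹ * ∑ i : Fin n, qloss τ (Y i ω' - (inner ℝ (X i ω') β1 : ℝ)))
              - ((n : ℝ)⁻¹ * ∑ i : Fin n, qloss τ (Y i ω' - (inner ℝ (X i ω') β2 : ℝ)))) ∂μ|
          ≤ C2 * max τ (1 - τ) * Real.sqrt (Cu * d / n) * ‖β1 - β2‖} := by
  refine ⟨1, 26208, by norm_num, by norm_num, ?_⟩
  intro d n hd hn Ω _ μ hμ τ Cl Cu hτ hCl hCu S hS hSp hq X Y hX hY hG hI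
  set W : Ω → Fin n → EuclideanSpace ℝ (Fin d) × ℝ := fun ω i => (X i ω, Y i ω) with hW
  have hWi : ∀ i, Measurable fun ω => (X i ω, Y i ω) := fun i => (hX i).prodMk (hY i)
  have hWm : Measurable W := measurable_pi_lambda _ hWi
  set P : Fin n → Measure (EuclideanSpace ℝ (Fin d) × ℝ) := fun i => μ.map fun ω => (X i ω, Y i ω) with hPdef
  have hPp : ∀ i, IsProbabilityMeasure (P i) := fun i =>
    Measure.isProbabilityMeasure_map (hWi i).aemeasurable
  have hmap : μ.map W = Measure.pi P :=
    (iIndepFun_iff_map_fun_eq_pi_map (fun i => (hWi i).aemeasurable)).1 hI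
  have hP : ∀ i v, ∃ s : NNReal, (s:ℝ) ≤ Cu * ‖v‖^2 ∧
      (P i).map (fun p => inner ℝ p.1 v) = gaussianReal 0 s := by
    intro i v
    refine ⟨Real.toNNReal (quadForm S v), ?_, ?_⟩
    · rw [Real.coe_toNNReal']
      exact max_le (hq v).2 (by positivity)
    · rw [← hG i v, hPdef, Measure.map_map (by fun_prop) (hWi i)]
      congr 1
      funext ω
      exact real_inner_comm _ _
  have hmain := main_pi hd hn τ hτ P Cu hCu hP
  have hn' : (0:ℝ) < n := by exact_mod_cast hn
  have hd' : (0:ℝ) < d := by exact_mod_cast hd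
  have hsq : Real.sqrt (144 * Cu * n * d) = 12 * (n * Real.sqrt (Cu * d / n)) := by
    rw [show 144 * Cu * n * d = (12 * n)^2 * (Cu * d / n) by field_simp; norm_num,
      Real.sqrt_mul (by positivity), Real.sqrt_sq (by positivity)]
    ring
  have hinteg : ∀ θ, ∫ w', ∑ i, ldiff τ θ (w' i) ∂(Measure.pi P) = ∫ ω, ∑ i, ldiff τ θ (W ω i) ∂μ := by
    intro θ
    rw [← hmap, integral_map hWm.aemeasurable]
    refine Continuous.aestronglyMeasurable ?_
    have := ldiff_cont τ θ
    fun_prop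
  rw [← hmap] at hmain
  have hbad := (Measure.le_map_apply hWm.aemeasurable _).trans hmain
  rw [hmap] at hbad
  set G : Set Ω := {ω | ∀ β1 β2 : EuclideanSpace ℝ (Fin d),
        |((n : ℝ)⁻¹ * ∑ i : Fin n, qloss τ (Y i ω - (inner ℝ (X i ω) β1 : ℝ)))
          - ((n : ℝ)⁻¹ * ∑ i : Fin n, qloss τ (Y i ω - (inner ℝ (X i ω) β2 : ℝ)))
          - ∫ ω', (((n : ℝ)⁻¹ * ∑ i : Fin n, qloss τ (Y i ω' - (inner ℝ (X i ω') β1 : ℝ)))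
              - ((n : ℝ)⁻¹ * ∑ i : Fin n, qloss τ (Y i ω' - (inner ℝ (X i ω') β2 : ℝ)))) ∂μ|
          ≤ 26208 * max τ (1 - τ) * Real.sqrt (Cu * d / n) * ‖β1 - β2‖} with hGdef
  have hGc : μ Gᶜ ≤ ENNReal.ofReal (Real.exp (-d)) := by
    refine (measure_mono ?_).trans hbad
    intro ω hω
    simp only [hGdef, Set.mem_compl_iff, Set.mem_ofPred_eq, not_forall, not_le] at hω
    obtain ⟨β1, β2, h⟩ := hω
    refine ⟨(β1, β2), ?_⟩
    have hL : ∀ ω, ((n : ℝ)⁻¹ * ∑ i : Fin n, qloss τ (Y i ω - (inner ℝ (X i ω) β1 : ℝ)))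
          - ((n : ℝ)⁻¹ * ∑ i : Fin n, qloss τ (Y i ω - (inner ℝ (X i ω) β2 : ℝ)))
          = (n:ℝ)⁻¹ * ∑ i, ldiff τ (β1, β2) (W ω i) := by
      intro ω
      rw [← mul_sub, ← Finset.sum_sub_distrib]
      rfl
    simp only [hL] at h
    rw [integral_const_mul, ← mul_sub, abs_mul, abs_of_pos (inv_pos.2 hn'), lt_inv_mul_iff₀ hn'] at h
    rw [hinteg]
    refine lt_of_eq_of_lt ?_ h
    rw [hsq]
    ring
  have hle := measure_univ_le_add_compl (μ := μ) G
  rw [measure_univ] at hle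
  have h1 : (1:ENNReal) ≤ μ G + ENNReal.ofReal (Real.exp (-d)) := hle.trans (by gcongr)
  refine le_trans ?_ (tsub_le_iff_right.2 h1)
  rw [← ENNReal.ofReal_one, ← ENNReal.ofReal_sub _ (Real.exp_pos _).le]
  apply ENNReal.ofReal_le_ofReal
  rw [one_mul]
  linarith [Real.exp_pos (-Real.sqrt ((n : ℝ) / Real.log n))]
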